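/- arXiv:2111.06507 — 3 statements merged into one kernel-verified Lean document; each statement's English description precedes it below -/
import Mathlib

section
/- Let L be a field, let r ≥ 1, and let m_1, ..., m_r ∈ L be such that no nonempty subset of {m_1,...,m_r} has sum zero (i.e., for every nonempty S ⊆ {1,...,r}, Σ_{i∈S} m_i ≠ 0). Let c_1, ..., c_r ∈ L be arbitrary. Then the set of tuples (x_1,...,x_r) ∈ L^r satisfying m_1 x_1^j + m_2 x_2^j + ... + m_r x_r^j = c_j for all j = 1, ..., r is finite of cardinality at most r!. -/
open scoped Classical
open Polynomial

namespace WPS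

lemma vand {k : Type*} [Field k] {r : ℕ} (m y : Fin r → k)
    (hm : ∀ S : Finset (Fin r), S.Nonempty → ∑ i ∈ S, m i ≠ 0)
    (h : ∀ j : Fin r, ∑ i, m i * y i ^ ((j : ℕ) + 1) = 0) (i0 : Fin r) : y i0 = 0 := by
  by_contra h0
  set s : Finset k := (Finset.univ.image y).erase (y i0) with hs
  let g : k[X] := ∏ v ∈ s, (X - C v)
  have hdeg : g.natDegree < r := by
    have h1 : g.natDegree = s.card := by simp [g]
    have h2 : s.card < (Finset.univ.image y).card :=
      Finset.card_erase_lt_of_mem (Finset.mem_image_of_mem _ (Finset.mem_univ _))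
    have h3 : (Finset.univ.image y).card ≤ r := by
      simpa using (Finset.card_image_le (s := (Finset.univ : Finset (Fin r))) (f := y))
    omega
  have key : ∑ i, m i * (y i * g.eval (y i)) = 0 := by
    have : ∀ i, m i * (y i * g.eval (y i))
        = ∑ j : Fin r, g.coeff j * (m i * y i ^ ((j : ℕ) + 1)) := by
      intro i
      rw [eval_eq_sum_range' hdeg, Finset.sum_range, Finset.mul_sum, Finset.mul_sum]
      exact Finset.sum_congr rfl fun j _ => by ring
    simp_rw [this]
    rw [Finset.sum_comm]
    simp_rw [← Finset.mul_sum, h, mul_zero, Finset.sum_const_zero]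
  have e1 : ∀ i, y i ≠ y i0 → g.eval (y i) = 0 := by
    intro i hi
    simp only [g, eval_prod]
    exact Finset.prod_eq_zero (i := y i) (by simp [hs, hi]) (by simp)
  have e2 : g.eval (y i0) ≠ 0 := by
    simp only [g, eval_prod]
    rw [Finset.prod_ne_zero_iff]
    intro v hv
    simp only [hs, Finset.mem_erase] at hv
    simpa [sub_eq_zero] using hv.1.symm
  have : ∑ i, m i * (y i * g.eval (y i))
      = (∑ i ∈ Finset.univ.filter (fun i => y i = y i0), m i) * (y i0 * g.eval (y i0)) := by
    rw [Finset.sum_mul, Finset.sum_filter]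
    refine Finset.sum_congr rfl fun i _ => ?_
    split_ifs with hi
    · rw [hi]
    · rw [e1 i hi]; simp
  rw [this] at key
  exact mul_ne_zero (hm _ ⟨i0, by simp⟩) (mul_ne_zero h0 e2) key

lemma val_mem {F K : Type*} [Field F] [Field K] {r : ℕ} (V : ValuationSubring K)
    (φ : F →+* V) (m : Fin r → F) (x : Fin r → K)
    (hm : ∀ S : Finset (Fin r), S.Nonempty → ∑ i ∈ S, m i ≠ 0)
    (h : ∀ j : Fin r, ∑ i, (φ (m i) : K) * x i ^ ((j : ℕ) + 1) ∈ V) (i : Fin r) : x i ∈ V := by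
  have : Nonempty (Fin r) := ⟨i⟩
  obtain ⟨i0, hi0⟩ := Finite.exists_max (fun i => V.valuation (x i))
  by_contra hi
  have hlt : 1 < V.valuation (x i0) := by
    rw [← V.valuation_le_one_iff, not_le] at hi
    exact hi.trans_le (hi0 i)
  have hx0 : x i0 ≠ 0 := by
    intro h0
    rw [h0, map_zero] at hlt
    exact absurd hlt (by simp)
  have hy : ∀ i, x i / x i0 ∈ V := by
    intro i
    rw [← V.valuation_le_one_iff, map_div₀]
    exact div_le_one_of_le₀ (hi0 i) zero_le
  have hzlt : V.valuation (x i0)⁻¹ < 1 := by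
    rw [map_inv₀]
    exact inv_lt_one_of_one_lt₀ hlt
  have hz : (x i0)⁻¹ ∈ V := by
    rw [← V.valuation_le_one_iff]; exact hzlt.le
  let z : V := ⟨(x i0)⁻¹, hz⟩
  have hzm : IsLocalRing.residue V z = 0 := by
    rw [IsLocalRing.residue_eq_zero_iff, V.valuation_lt_one_iff]
    exact hzlt
  let y : Fin r → V := fun i => ⟨x i / x i0, hy i⟩
  have := vand (fun i => IsLocalRing.residue V (φ (m i))) (fun i => IsLocalRing.residue V (y i))
    (by
      intro S hS
      rw [← map_sum, ← map_sum]
      have := hm S hS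
      rw [← RingHom.comp_apply]
      exact (map_ne_zero_iff _ (RingHom.injective _)).mpr this)
    (by
      intro j
      have : ∑ i, φ (m i) * y i ^ ((j : ℕ) + 1)
          = ⟨_, h j⟩ * z ^ ((j : ℕ) + 1) := by
        ext
        simp only [z, y]
        push_cast
        rw [Finset.sum_mul]
        refine Finset.sum_congr rfl fun i _ => ?_
        rw [div_pow, inv_pow]; ring
      have h2 := congrArg (IsLocalRing.residue V) this
      simpa [hzm] using h2) i0
  have hy0 : y i0 = 1 := by
    ext; simp [y, hx0]
  simp [hy0] at this

noncomputable def p {F : Type*} [Field F] {r : ℕ} (m : Fin r → F) (j : Fin r) :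
    MvPolynomial (Fin r) F :=
  ∑ i, MvPolynomial.C (m i) * MvPolynomial.X i ^ ((j : ℕ) + 1)

lemma integral_X {F : Type*} [Field F] {r : ℕ} (m : Fin r → F)
    (hm : ∀ S : Finset (Fin r), S.Nonempty → ∑ i ∈ S, m i ≠ 0) (i : Fin r) :
    IsIntegral (Algebra.adjoin F (Set.range (p m))) (MvPolynomial.X i : MvPolynomial (Fin r) F) := by
  set A := Algebra.adjoin F (Set.range (p m)) with hA
  let B := MvPolynomial (Fin r) F
  let K := FractionRing B
  let f : A →+* K := (algebraMap B K).comp A.val.toRingHom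
  let R : Subring K := f.range
  have hmem : algebraMap B K (MvPolynomial.X i) ∈ (integralClosure (Subring.closure (R : Set K)) K).toSubring := by
    rw [← iInf_valuationSubring_superset, Subring.mem_iInf]
    rintro ⟨V, hV⟩
    have hF : ∀ a : F, algebraMap B K (MvPolynomial.C a) ∈ V := fun a =>
      hV ⟨algebraMap F A a, rfl⟩
    refine val_mem V (((algebraMap B K).comp MvPolynomial.C).codRestrict V.toSubring hF) m
      (fun i => algebraMap B K (MvPolynomial.X i)) hm ?_ i
    intro j
    have : algebraMap B K (p m j) ∈ V :=
      hV ⟨⟨p m j, Algebra.subset_adjoin ⟨j, rfl⟩⟩, rfl⟩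
    simp only [p, map_sum, map_mul, map_pow] at this
    exact this
  rw [Subring.closure_eq] at hmem
  obtain ⟨q, hq, hq0⟩ : IsIntegral R (algebraMap B K (MvPolynomial.X i)) := hmem
  have hl : q ∈ lifts f.rangeRestrict := by
    rw [lifts_iff_coeff_lifts]
    intro n
    exact f.rangeRestrict_surjective _
  obtain ⟨q', hq', -, hmon⟩ := lifts_and_natDegree_eq_and_monic hl hq
  refine ⟨q', hmon, ?_⟩
  apply IsFractionRing.injective B K
  rw [map_zero, hom_eval₂, ← hq0, ← hq', eval₂_map]
  rfl

lemma integral_B {F : Type*} [Field F] {r : ℕ} (m : Fin r → F)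
    (hm : ∀ S : Finset (Fin r), S.Nonempty → ∑ i ∈ S, m i ≠ 0)  :
    Algebra.IsIntegral (Algebra.adjoin F (Set.range (p m))) (MvPolynomial (Fin r) F) := by
  constructor
  intro b
  induction b using MvPolynomial.induction_on with
  | C a => exact isIntegral_algebraMap (x := algebraMap F (Algebra.adjoin F (Set.range (p m))) a)
  | add a b ha hb => exact ha.add hb
  | mul_X a i ha => exact ha.mul (integral_X m hm i)

lemma algInd {F : Type*} [Field F] {r : ℕ} (m : Fin r → F)
    (hm : ∀ S : Finset (Fin r), S.Nonempty → ∑ i ∈ S, m i ≠ 0)  :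
    AlgebraicIndependent F (p m) := by
  have := integral_B m hm
  refine (Algebra.IsAlgebraic.isTranscendenceBasis_of_lift_le_trdeg_of_finite F (p m) ?_).1
  rw [MvPolynomial.trdeg_of_isDomain]
  simp

lemma intClosed {F : Type*} [Field F] {r : ℕ} (m : Fin r → F)
    (hm : ∀ S : Finset (Fin r), S.Nonempty → ∑ i ∈ S, m i ≠ 0)  :
    IsIntegrallyClosed (Algebra.adjoin F (Set.range (p m))) :=
  IsIntegrallyClosed.of_equiv (algInd m hm).aevalEquiv.toRingEquiv

def T (r n : ℕ) : Finset (Fin r → ℕ) :=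
  (Fintype.piFinset fun _ => Finset.range (n+1)).filter fun a => ∑ i, a i ≤ n

def W (r n : ℕ) : Finset (Fin r → ℕ) :=
  (Fintype.piFinset fun _ => Finset.range (n+1)).filter fun a => ∑ i : Fin r, ((i:ℕ)+1) * a i ≤ n

lemma mem_T {r n : ℕ} (a : Fin r → ℕ) : a ∈ T r n ↔ ∑ i, a i ≤ n := by
  simp only [T, Finset.mem_filter, Fintype.mem_piFinset, Finset.mem_range, and_iff_right_iff_imp]
  intro h i
  have := Finset.single_le_sum (f := a) (fun _ _ => Nat.zero_le _) (Finset.mem_univ i)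
  omega

lemma mem_W {r n : ℕ} (a : Fin r → ℕ) : a ∈ W r n ↔ ∑ i : Fin r, ((i:ℕ)+1) * a i ≤ n := by
  simp only [W, Finset.mem_filter, Fintype.mem_piFinset, Finset.mem_range, and_iff_right_iff_imp]
  intro h i
  have := Finset.single_le_sum (f := fun i : Fin r => ((i:ℕ)+1) * a i) (fun _ _ => Nat.zero_le _) (Finset.mem_univ i)
  have h2 : a i ≤ ((i:ℕ)+1) * a i := Nat.le_mul_of_pos_left _ (by omega)
  have h3 : ((i:ℕ)+1) * a i ≤ n := this.trans h
  omega

lemma T_le (r n : ℕ) : (T r n).card ≤ (W r n).card * r.factorial := by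
  have hc : (W r n ×ˢ Fintype.piFinset fun i : Fin r => Finset.range ((i:ℕ)+1)).card
      = (W r n).card * r.factorial := by
    rw [Finset.card_product, Fintype.card_piFinset]
    simp only [Finset.card_range]
    rw [Fin.prod_univ_eq_prod_range (fun i => i + 1), Finset.prod_range_add_one_eq_factorial]
  rw [← hc]
  apply Finset.card_le_card_of_injOn
    (fun a : Fin r → ℕ => ((fun i : Fin r => a i / ((i:ℕ)+1)), (fun i : Fin r => a i % ((i:ℕ)+1))))
  · intro a ha
    simp only [Finset.mem_coe, mem_T] at ha
    simp only [Finset.coe_product, Set.mem_prod, Finset.mem_coe, mem_W, Fintype.mem_piFinset,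
      Finset.mem_range]
    refine ⟨le_trans (Finset.sum_le_sum fun i _ => Nat.mul_div_le _ _) ha, fun i => Nat.mod_lt _ (by omega)⟩
  · intro a _ b _ hab
    simp only [Prod.mk.injEq] at hab
    ext i
    rw [← Nat.div_add_mod (a i) (i+1), ← Nat.div_add_mod (b i) (i+1),
      congrFun hab.1 i, congrFun hab.2 i]

lemma T_poly (r n : ℕ) : (T r n).card ≤ (n+1)^r := by
  refine (Finset.card_filter_le _ _).trans ?_
  simp

lemma T_pos (r n : ℕ) : 0 < (T r n).card :=
  Finset.card_pos.mpr ⟨0, by simp [mem_T]⟩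

lemma growth (r N D c : ℕ) (h : ∀ n, N * (T r n).card ≤ D * (T r (n + c)).card) : N ≤ D := by
  by_contra hlt
  push Not at hlt
  have hD : 0 < D := by
    rcases Nat.eq_zero_or_pos D with h0 | h0
    · have h1 := h 0
      have h2 := T_pos r 0
      subst h0
      have := Nat.mul_pos hlt h2
      omega
    · exact h0
  have h1 : ∀ k, N^k ≤ D^k * (T r (k * c)).card := by
    intro k
    induction k with
    | zero => simpa using T_pos r 0
    | succ k ih =>
      calc N^(k+1) = N^k * N := pow_succ _ _
        _ ≤ (D^k * (T r (k * c)).card) * N := Nat.mul_le_mul_right _ ih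
        _ = D^k * (N * (T r (k * c)).card) := by ring
        _ ≤ D^k * (D * (T r (k * c + c)).card) := Nat.mul_le_mul_left _ (h _)
        _ = _ := by rw [Nat.succ_mul]; ring
  have h2 : ∀ k : ℕ, ((N:ℝ)/D)^k ≤ (k * c + 1 : ℝ)^r := by
    intro k
    rw [div_pow, div_le_iff₀ (by positivity)]
    have := (h1 k).trans (Nat.mul_le_mul_left _ (T_poly r (k*c)))
    rw [mul_comm]
    exact_mod_cast this
  have h3 : ∀ k : ℕ, 1 ≤ k → ((N:ℝ)/D)^k ≤ (c+1:ℝ)^r * k^r := by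
    intro k hk
    refine (h2 k).trans ?_
    rw [← mul_pow]
    gcongr
    have : (1:ℝ) ≤ k := by exact_mod_cast hk
    nlinarith
  have hb : (1:ℝ) < (N:ℝ)/D := by
    rw [one_lt_div (by positivity)]
    exact_mod_cast hlt
  have h4 := (isLittleO_pow_const_const_pow_of_one_lt (R := ℝ) r hb).def
    (c := 1 / (2 * (c+1:ℝ)^r)) (by positivity)
  obtain ⟨k, hk1, hk⟩ := (h4.and (Filter.eventually_ge_atTop 1)).exists
  have h5 := h3 k hk
  rw [Real.norm_of_nonneg (by positivity), Real.norm_of_nonneg (by positivity),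
    div_mul_eq_mul_div, one_mul, le_div_iff₀ (by positivity)] at hk1
  have : (0:ℝ) < ((N:ℝ)/D)^k := by positivity
  linarith


lemma finrank_le (F : Type*) [Field F] (r n : ℕ) :
    Module.finrank F (MvPolynomial.restrictTotalDegree (Fin r) F n) ≤ (T r n).card := by
  have b := MvPolynomial.basisRestrictSupport F {s : Fin r →₀ ℕ | (s.sum fun _ e => e) ≤ n}
  have e1 : Module.finrank F (MvPolynomial.restrictTotalDegree (Fin r) F n)
     = Nat.card {s : Fin r →₀ ℕ | (s.sum fun _ e => e) ≤ n} :=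
    Module.finrank_eq_nat_card_basis b
  have e2 : (T r n).card = Nat.card (T r n : Set (Fin r → ℕ)) := by simp
  rw [e1, e2]
  refine Nat.card_le_card_of_injective (fun s => ⟨fun i => s.1 i, ?_⟩) ?_
  · have := s.2
    simp only [Set.mem_setOf_eq] at this
    rw [Finset.mem_coe, mem_T]
    rwa [Finsupp.sum_fintype _ _ (by simp)] at this
  · intro s t hst
    simp only [Subtype.mk.injEq] at hst
    ext i
    exact congrFun hst i

lemma pow_indep {A B : Type*} [CommRing A] [IsDomain A] [IsIntegrallyClosed A] [CommRing B]
    [IsDomain B] [Algebra A B] [Module.IsTorsionFree A B] (l : B) :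
    LinearIndependent A (fun i : Fin (minpoly A l).natDegree => l ^ (i : ℕ)) := by
  rw [Fintype.linearIndependent_iff]
  intro g hg
  let q : A[X] := ∑ i : Fin (minpoly A l).natDegree, C (g i) * X ^ (i : ℕ)
  have hq : q = 0 := by
    by_contra hq
    have h1 := minpoly.IsIntegrallyClosed.degree_le_of_ne_zero (R := A) (s := l) hq (by
      simp only [q, map_sum, map_mul, aeval_C, map_pow, aeval_X]
      simpa [Algebra.smul_def] using hg)
    have h2 : q.degree < (minpoly A l).natDegree := degree_sum_fin_lt g
    have h3 := h1.trans_lt h2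
    by_cases h0 : minpoly A l = 0
    · rw [h0] at h2
      simp only [natDegree_zero, Nat.cast_zero] at h2
      exact hq (by rwa [← Polynomial.degree_eq_bot, ← Nat.WithBot.lt_zero_iff])
    · rw [degree_eq_natDegree h0] at h3
      exact lt_irrefl _ h3
  intro i
  have := congrArg (fun q => coeff q (i : ℕ)) hq
  simpa [q, finsetSum_coeff, coeff_X_pow, Fin.val_inj] using this

lemma totalDegree_p {F : Type*} [Field F] {r : ℕ} (m : Fin r → F) (j : Fin r) :
    (p m j).totalDegree ≤ j + 1 := by
  refine MvPolynomial.totalDegree_finsetSum_le fun i _ => ?_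
  refine (MvPolynomial.totalDegree_mul _ _).trans ?_
  rw [MvPolynomial.totalDegree_C, zero_add, MvPolynomial.totalDegree_X_pow]

lemma deg_le {F : Type*} [Field F] {r : ℕ} (m : Fin r → F)
    (hm : ∀ S : Finset (Fin r), S.Nonempty → ∑ i ∈ S, m i ≠ 0) (l : MvPolynomial (Fin r) F) :
    (minpoly (Algebra.adjoin F (Set.range (p m))) l).natDegree ≤ r.factorial := by
  set A := Algebra.adjoin F (Set.range (p m)) with hA
  have := intClosed m hm
  set N := (minpoly A l).natDegree with hN
  apply growth r N r.factorial (N * l.totalDegree)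
  intro n
  set M := n + N * l.totalDegree with hM
  have h1 : LinearIndependent A (fun i : Fin N => l ^ (i : ℕ)) := pow_indep l
  let e := (algInd m hm).aevalEquiv
  have h2 : LinearIndependent F (fun a : W r n =>
      e (MvPolynomial.monomial (Finsupp.equivFunOnFinite.symm a.1) 1)) := by
    have h3 := (((MvPolynomial.basisMonomials (Fin r) F).map e.toLinearEquiv).linearIndependent).comp
      (fun a : W r n => Finsupp.equivFunOnFinite.symm a.1)
      (Finsupp.equivFunOnFinite.symm.injective.comp Subtype.val_injective)
    have h4 : (fun a : W r n => e (MvPolynomial.monomial (Finsupp.equivFunOnFinite.symm a.1) 1))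
        = (⇑((MvPolynomial.basisMonomials (Fin r) F).map e.toLinearEquiv) ∘
          fun a : W r n => Finsupp.equivFunOnFinite.symm a.1) := by
      funext a
      simp
    rw [h4]
    exact h3
  have h3 := linearIndependent_smul h2 h1
  have hin : ∀ x : W r n × Fin N,
      e (MvPolynomial.monomial (Finsupp.equivFunOnFinite.symm x.1.1) 1) • l ^ (x.2 : ℕ)
        ∈ MvPolynomial.restrictTotalDegree (Fin r) F M := by
    rintro ⟨⟨a, ha⟩, i⟩
    rw [MvPolynomial.mem_restrictTotalDegree, Algebra.smul_def]
    refine (MvPolynomial.totalDegree_mul _ _).trans ?_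
    rw [hM]
    gcongr
    · rw [AlgebraicIndependent.algebraMap_aevalEquiv, MvPolynomial.aeval_monomial, map_one, one_mul,
        Finsupp.prod_fintype _ _ (by simp)]
      refine (MvPolynomial.totalDegree_finsetProd _ _).trans ?_
      refine le_trans (Finset.sum_le_sum fun j _ => ?_) ((mem_W a).1 ha)
      refine (MvPolynomial.totalDegree_pow _ _).trans ?_
      rw [mul_comm]
      exact Nat.mul_le_mul (totalDegree_p m j) le_rfl
    · exact (MvPolynomial.totalDegree_pow _ _).trans (Nat.mul_le_mul_right _ i.2.le)
  have h4 : LinearIndependent F (fun x : W r n × Fin N =>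
      (⟨_, hin x⟩ : MvPolynomial.restrictTotalDegree (Fin r) F M)) :=
    LinearIndependent.of_comp (Submodule.subtype _) h3
  have h5 := h4.fintype_card_le_finrank.trans (finrank_le F r M)
  simp only [Fintype.card_prod, Fintype.card_coe, Fintype.card_fin] at h5
  calc N * (T r n).card ≤ N * ((W r n).card * r.factorial) := Nat.mul_le_mul_left _ (T_le r n)
    _ = r.factorial * ((W r n).card * N) := by ring
    _ ≤ _ := Nat.mul_le_mul_left _ h5

lemma main {F : Type*} [Field F] [Infinite F] {r : ℕ} (m c : Fin r → F)
    (hm : ∀ S : Finset (Fin r), S.Nonempty → ∑ i ∈ S, m i ≠ 0) (s : Finset (Fin r → F))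
    (hs : ∀ x ∈ s, ∀ j : Fin r, ∑ i, m i * x i ^ ((j : ℕ) + 1) = c j) :
    s.card ≤ r.factorial := by
  rcases s.eq_empty_or_nonempty with rfl | ⟨x0, hx0⟩
  · simp
  obtain ⟨f, hf⟩ := Module.exists_dual_forall_apply_ne_zero (K := F)
    (fun q : {q : s × s // q.1 ≠ q.2} => (q.1.1 : Fin r → F) - q.1.2)
    (fun q h => q.2 (Subtype.ext (sub_eq_zero.1 h)))
  let l : MvPolynomial (Fin r) F := ∑ i, MvPolynomial.C (f (Pi.single i 1)) * MvPolynomial.X i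
  have hl : ∀ x, MvPolynomial.aeval x l = f x := by
    intro x
    conv_rhs => rw [← Finset.univ_sum_single x]
    simp only [l, map_sum, map_mul, MvPolynomial.aeval_X, MvPolynomial.aeval_C]
    refine Finset.sum_congr rfl fun i _ => ?_
    have : (Pi.single i (x i) : Fin r → F) = x i • Pi.single i 1 := by
      rw [← Pi.single_smul]; simp
    rw [this, map_smul, smul_eq_mul, mul_comm]; rfl
  set A := Algebra.adjoin F (Set.range (p m)) with hA
  let ψ : (Fin r → F) → A →ₐ[F] F := fun x => (MvPolynomial.aeval x).comp A.val
  have hψ : ∀ x ∈ s, ψ x = ψ x0 := by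
    intro x hx
    apply AlgHom.adjoin_ext
    rintro _ ⟨j, rfl⟩
    have : ∀ x ∈ s, MvPolynomial.aeval x (p m j) = c j := by
      intro x hx
      rw [← hs x hx j]
      simp [p]
    exact (this x hx).trans (this x0 hx0).symm
  have hint : IsIntegral A l := (integral_B m hm).isIntegral l
  let P : F[X] := (minpoly A l).map (ψ x0).toRingHom
  have hPm : P.Monic := (minpoly.monic hint).map _
  have hroot : ∀ x ∈ s, P.IsRoot (f x) := by
    intro x hx
    have h0 := congrArg (MvPolynomial.aeval x) (minpoly.aeval A l)
    rw [aeval_def, map_zero] at h0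
    rw [IsRoot, eval_map, ← hψ x hx, ← hl x, ← h0]
    exact (hom_eval₂ _ _ (MvPolynomial.aeval x : MvPolynomial (Fin r) F →ₐ[F] F).toRingHom _).symm
  have hinj : Set.InjOn f s := by
    intro x hx y hy hxy
    by_contra hne
    exact hf ⟨(⟨x, hx⟩, ⟨y, hy⟩), fun h => hne (congrArg Subtype.val h)⟩ (by simp [hxy])
  calc s.card = (s.image f).card := (Finset.card_image_of_injOn hinj).symm
    _ ≤ P.roots.toFinset.card := Finset.card_le_card (by
        intro v hv
        obtain ⟨x, hx, rfl⟩ := Finset.mem_image.1 hv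
        rw [Multiset.mem_toFinset, mem_roots hPm.ne_zero]
        exact hroot x hx)
    _ ≤ P.natDegree := (Multiset.toFinset_card_le _).trans (card_roots' _)
    _ = (minpoly A l).natDegree := (minpoly.monic hint).natDegree_map _
    _ ≤ _ := deg_le m hm l

end WPS

theorem weighted_power_sums_finite_solutions (L : Type*) [Field L] (r : ℕ) (hr : 1 ≤ r)
    (m c : Fin r → L)
    (hm : ∀ S : Finset (Fin r), S.Nonempty → ∑ i ∈ S, m i ≠ 0) :
    {x : Fin r → L | ∀ j : Fin r, ∑ i, m i * x i ^ ((j : ℕ) + 1) = c j}.Finite ∧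
      {x : Fin r → L | ∀ j : Fin r, ∑ i, m i * x i ^ ((j : ℕ) + 1) = c j}.ncard
        ≤ Nat.factorial r := by
  have key : ∀ s : Finset (Fin r → L),
      (s : Set (Fin r → L)) ⊆ {x : Fin r → L | ∀ j : Fin r, ∑ i, m i * x i ^ ((j : ℕ) + 1) = c j} →
      s.card ≤ r.factorial := by
    intro s hs
    let φ := algebraMap L (AlgebraicClosure L)
    have hφ : Function.Injective φ := φ.injective
    have hinj : Function.Injective (fun x : Fin r → L => φ ∘ x) := hφ.comp_left
    have : Infinite (AlgebraicClosure L) := IsAlgClosed.instInfinite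
    rw [← Finset.card_image_of_injective s hinj]
    refine WPS.main (fun i => φ (m i)) (fun i => φ (c i)) ?_ _ ?_
    · intro S hS
      rw [← map_sum]
      exact (map_ne_zero_iff _ hφ).mpr (hm S hS)
    · intro x hx j
      obtain ⟨y, hy, rfl⟩ := Finset.mem_image.1 hx
      have := hs hy j
      simp only [Function.comp_apply]
      rw [← this, map_sum]
      simp
  have hfin : {x : Fin r → L | ∀ j : Fin r, ∑ i, m i * x i ^ ((j : ℕ) + 1) = c j}.Finite := by
    by_contra hinf
    obtain ⟨t, ht, htc⟩ := Set.Infinite.exists_subset_card_eq hinf (r.factorial + 1)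
    have := key t ht
    omega
  refine ⟨hfin, ?_⟩
  rw [Set.ncard_eq_toFinset_card _ hfin]
  exact key _ (by simp)
end

section
/- Let K be a field whose characteristic is zero or greater than n (so that the characteristic is prime to n!), and let 1 ≤ k ≤ n-1. Fix a_1, ..., a_{n-k} ∈ K. Then the number of tuples (a_{n-k+1}, ..., a_n) ∈ K^k such that the polynomial P(x) = x^n + a_1 x^{n-1} + ... + a_n has index exactly k over K is at most q(k, n-k) · (n-k)!, where q(k, n-k) denotes the number of partitions of k into at most n-k parts. -/
open scoped Classical
open Polynomial

/-- The index of a polynomial `P` over a field `K`: writing `P = ∏ P_i^{e_i}` with the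
`P_i` distinct irreducible of degree `f_i`, the index is `Σ (e_i - 1) f_i`; when the
irreducible factors of `P` are separable (e.g. in characteristic `0` or characteristic
greater than `deg P`) this equals `deg P` minus the number of distinct roots of `P` in
an algebraic closure of `K`. -/
noncomputable def polyIndexOver (K : Type*) [Field K] (P : Polynomial K) : ℕ :=
  P.natDegree - ((P.map (algebraMap K (AlgebraicClosure K))).roots.toFinset.card)

/-- The index over `𝔽_p` of the reduction modulo a prime `p` of the monic integer
polynomial `x^n + a_1 x^{n-1} + ... + a_n`. -/
noncomputable def indexModP (p : ℕ) (hp : p.Prime) (n : ℕ) (a : Fin n → ℤ) : ℕ :=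
  haveI : Fact p.Prime := ⟨hp⟩
  polyIndexOver (ZMod p)
    (X ^ n + ∑ i : Fin n, C ((a i : ZMod p)) * X ^ (n - 1 - (i : ℕ)))


/-- the polynomial with given roots and multiplicities -/
noncomputable def wpoly {R : Type*} [CommRing R] {m : ℕ} (e : Fin m → ℕ) (u : Fin m → R) : R[X] :=
  ∏ i, (X - C (u i)) ^ (e i)

lemma wpoly_map {R S : Type*} [CommRing R] [CommRing S] {m : ℕ} (e : Fin m → ℕ) (u : Fin m → R)
    (g : R →+* S) : (wpoly e u).map g = wpoly e (fun i => g (u i)) := by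
  simp [wpoly, Polynomial.map_prod]

lemma wpoly_monic {R : Type*} [CommRing R] {m : ℕ} (e : Fin m → ℕ) (u : Fin m → R) :
    (wpoly e u).Monic :=
  monic_prod_of_monic _ _ fun _ _ => (monic_X_sub_C _).pow _

lemma wpoly_natDegree {R : Type*} [CommRing R] [Nontrivial R] {m : ℕ} (e : Fin m → ℕ)
    (u : Fin m → R) : (wpoly e u).natDegree = ∑ i, e i := by
  unfold wpoly
  rw [natDegree_prod_of_monic _ _ fun _ _ => (monic_X_sub_C _).pow _]
  refine Finset.sum_congr rfl fun i _ => ?_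
  rw [(monic_X_sub_C _).natDegree_pow]; simp

lemma dvd_derivative_prod {R ι : Type*} [CommRing R] (s : Finset ι) (e : ι → ℕ) (u : ι → R) :
    (∏ i ∈ s, (X - C (u i)) ^ (e i - 1)) ∣ derivative (∏ i ∈ s, (X - C (u i)) ^ (e i)) := by
  classical
  induction s using Finset.induction_on with
  | empty => simp
  | insert a s ha ih =>
    rw [Finset.prod_insert ha, Finset.prod_insert ha, derivative_mul]
    refine dvd_add (mul_dvd_mul ?_ ?_) (mul_dvd_mul ?_ ih)
    · rw [derivative_X_sub_C_pow]; exact dvd_mul_left _ _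
    · exact Finset.prod_dvd_prod_of_dvd _ _ fun i _ => pow_dvd_pow _ (by omega)
    · exact pow_dvd_pow _ (by omega)

lemma wpoly_no_infty {L : Type*} [Field L] {m n : ℕ} (hn : ∀ t : ℕ, 1 ≤ t → t ≤ n → (t : L) ≠ 0)
    (e : Fin m → ℕ) (he : ∀ i, 1 ≤ e i) (hs : ∑ i, e i = n) (u : Fin m → L)
    (h : ∀ j : Fin m, (wpoly e u).coeff (n - 1 - j) = 0) (i : Fin m) : u i = 0 := by
  have hdeg := (wpoly_natDegree e u).trans hs
  have hmon := wpoly_monic e u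
  have hmn : m ≤ n := by
    rw [← hs]
    calc m = ∑ i : Fin m, 1 := by simp
      _ ≤ _ := Finset.sum_le_sum fun i _ => he i
  set P := wpoly e u with hP
  set Q := (n : L[X]) * P - X * derivative P with hQ
  have hQc : ∀ i, Q.coeff i = ((n : L) - i) * P.coeff i := by
    intro i
    rw [hQ, coeff_sub, coeff_natCast_mul]
    cases i with
    | zero => simp
    | succ i => rw [coeff_X_mul, coeff_derivative]; push_cast; ring
  have hdvd : (wpoly (fun i => e i - 1) u) ∣ Q := by
    refine dvd_sub (Dvd.dvd.mul_left ?_ _) (Dvd.dvd.mul_left ?_ _)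
    · exact Finset.prod_dvd_prod_of_dvd _ _ fun i _ => pow_dvd_pow _ (Nat.sub_le _ _)
    · exact dvd_derivative_prod _ _ _
  have hRdeg : (wpoly (fun i => e i - 1) u).natDegree = n - m := by
    rw [wpoly_natDegree, Finset.sum_tsub_distrib _ (fun i _ => he i), hs]; simp
  have hQ0 : Q = 0 := by
    refine eq_zero_of_dvd_of_degree_lt hdvd ?_
    rw [degree_eq_natDegree (wpoly_monic _ _).ne_zero, hRdeg, degree_lt_iff_coeff_zero]
    intro t ht
    rw [hQc]
    rcases lt_trichotomy t n with h1 | h1 | h1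
    · have := h ⟨n - 1 - t, by omega⟩
      simp only at this
      rw [show n - 1 - (n - 1 - t) = t by omega] at this
      rw [this, mul_zero]
    · subst h1; simp
    · rw [coeff_eq_zero_of_natDegree_lt (by omega), mul_zero]
  have hc : ∀ t < n, P.coeff t = 0 := by
    intro t ht
    have h1 := hQc t
    rw [hQ0, coeff_zero] at h1
    rcases mul_eq_zero.mp h1.symm with h2 | h2
    · exfalso
      apply hn (n - t) (by omega) (by omega)
      rw [Nat.cast_sub ht.le]; exact h2
    · exact h2
  have hPX : P = X ^ n := by
    ext t
    rw [coeff_X_pow]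
    rcases lt_trichotomy t n with h1 | h1 | h1
    · rw [hc t h1, if_neg h1.ne]
    · rw [h1, if_pos rfl, ← hdeg]; exact hmon
    · rw [coeff_eq_zero_of_natDegree_lt (by omega), if_neg (by omega)]
  have hev : P.eval (u i) = 0 := by
    rw [hP, wpoly, eval_prod]
    refine Finset.prod_eq_zero (Finset.mem_univ i) ?_
    have := he i
    simp [show e i ≠ 0 by omega]
  rw [hPX] at hev
  simp only [eval_pow, eval_X] at hev
  exact (pow_eq_zero_iff (by have := i.2; omega)).mp hev

lemma wpoly_scale {L : Type*} [Field L] {m n : ℕ} (e : Fin m → ℕ) (hs : ∑ i, e i = n)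
    (u : Fin m → L) (l : L) (t : ℕ) :
    (wpoly e (fun i => l * u i)).coeff t * l ^ t = l ^ n * (wpoly e u).coeff t := by
  have : (wpoly e (fun i => l * u i)).comp (C l * X) = C (l ^ n) * wpoly e u := by
    simp only [wpoly, prod_comp, pow_comp, sub_comp, X_comp, C_comp]
    rw [← hs, ← Finset.prod_pow_eq_pow_sum, map_prod, ← Finset.prod_mul_distrib]
    refine Finset.prod_congr rfl fun i _ => ?_
    rw [C_pow, ← mul_pow, C_mul, mul_sub]
  rw [← comp_C_mul_X_coeff, this, coeff_C_mul]

lemma mem_valuation {E : Type*} [Field E] (V : ValuationSubring E) {m n : ℕ}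
    (hn : ∀ t : ℕ, 1 ≤ t → t ≤ n → (t : E) ≠ 0 ∧ (t : E)⁻¹ ∈ V)
    (e : Fin m → ℕ) (he : ∀ i, 1 ≤ e i) (hs : ∑ i, e i = n) (x : Fin m → E)
    (h : ∀ j : Fin m, (wpoly e x).coeff (n - 1 - j) ∈ V) (i : Fin m) : x i ∈ V := by
  by_contra hi
  have : Nonempty (Fin m) := ⟨i⟩
  have hmn : m ≤ n := by
    rw [← hs]
    calc m = ∑ i : Fin m, 1 := by simp
      _ ≤ _ := Finset.sum_le_sum fun i _ => he i
  obtain ⟨i0, h0⟩ := Finite.exists_max (fun i => V.valuation (x i))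
  set l := x i0 with hl
  have hl1 : 1 < V.valuation l := by
    rw [← V.valuation_le_one_iff, not_le] at hi
    exact hi.trans_le (h0 i)
  have hl0 : l ≠ 0 := by
    rintro h; rw [h, map_zero] at hl1; exact absurd hl1 (by simp)
  have hu : ∀ i, l⁻¹ * x i ∈ V := by
    intro i
    rw [← V.valuation_le_one_iff, map_mul, map_inv₀]
    calc _ ≤ (V.valuation l)⁻¹ * V.valuation l := by gcongr; exact h0 i
      _ = 1 := inv_mul_cancel₀ (by simpa using hl0)
  let u : Fin m → V := fun i => ⟨l⁻¹ * x i, hu i⟩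
  have key := wpoly_no_infty (L := IsLocalRing.ResidueField V) (n := n) ?_ e he hs
    (fun i => IsLocalRing.residue V (u i)) ?_ i0
  · have : u i0 = 1 := by
      ext; simp [u, ← hl, hl0]
    simp [this] at key
  · intro t h1 h2 h3
    obtain ⟨h4, h5⟩ := hn t h1 h2
    have h6 : (t : V) * ⟨_, h5⟩ = 1 := by ext; simp [h4]
    have := congrArg (IsLocalRing.residue V) h6
    rw [map_mul, map_natCast, h3] at this
    simp at this
  · intro j
    rw [← wpoly_map, coeff_map, IsLocalRing.residue_eq_zero_iff, V.valuation_lt_one_iff]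
    have h1 : (((wpoly e u).coeff (n - 1 - j) : V) : E) =
        (wpoly e (fun i => l⁻¹ * x i)).coeff (n-1-j) := by
      have := wpoly_map e u V.subtype
      rw [show (fun i => l⁻¹ * x i) = fun i => V.subtype (u i) from rfl, ← this, coeff_map]; rfl
    have h2 := wpoly_scale e hs (fun i => l⁻¹ * x i) l (n - 1 - j)
    simp only [mul_inv_cancel_left₀ hl0] at h2
    have h3 : l ^ n = l ^ (n-1-j) * l ^ ((j:ℕ)+1) := by
      rw [← pow_add]; congr 1; have := j.2; omega
    rw [h3, mul_comm, mul_assoc] at h2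
    have h4 := mul_left_cancel₀ (pow_ne_zero _ hl0) h2
    have h5 := h j
    change (wpoly e fun i => x i).coeff _ ∈ V at h5
    rw [h4, ← V.valuation_le_one_iff, map_mul, map_pow] at h5
    rw [h1]
    by_contra hcon
    rw [not_lt] at hcon
    have h6 : 1 < V.valuation l ^ ((j:ℕ)+1) := one_lt_pow₀ hl1 (by omega)
    have h7 := mul_le_mul' h6.le hcon
    have := (h6.trans_le (le_mul_of_one_le_right' hcon)).trans_le h5
    exact lt_irrefl _ this

lemma growth_contra (N : ℕ → ℕ) (D G m : ℕ) (hN0 : 1 ≤ N 0) (hN : ∀ d, N d ≤ (d + 1) ^ m)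
    (hD : 1 ≤ D) (h : ∀ u, (D + 1) * N u ≤ D * N (u + G)) : False := by
  have h1 : ∀ t, (D + 1) ^ t ≤ D ^ t * N (t * G) := by
    intro t
    induction t with
    | zero => simpa using hN0
    | succ t ih =>
      calc (D+1)^(t+1) = (D+1) * (D+1)^t := by ring
        _ ≤ (D+1) * (D ^ t * N (t * G)) := by gcongr
        _ = D ^ t * ((D+1) * N (t * G)) := by ring
        _ ≤ D ^ t * (D * N (t * G + G)) := Nat.mul_le_mul_left _ (h _)
        _ = _ := by rw [show (t+1)*G = t * G + G by ring]; ring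
  have hD' : (0:ℝ) < D := by exact_mod_cast hD
  have hr : (1:ℝ) < (D+1)/D := by rw [lt_div_iff₀ hD']; linarith
  have h2 := tendsto_pow_const_div_const_pow_of_one_lt m hr
  have h3 : ∀ t : ℕ, 1 ≤ t → (1:ℝ) / (G+1)^m ≤ (t:ℝ)^m / ((D+1)/D)^t := by
    intro t ht
    rw [div_le_div_iff₀ (by positivity) (by positivity), one_mul, div_pow,
      div_le_iff₀ (by positivity), ← mul_pow]
    have h4 : (D+1)^t ≤ (t * (G+1))^m * D^t := by
      calc _ ≤ _ := h1 t
        _ ≤ D^t * (t*G+1)^m := by gcongr; exact hN _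
        _ ≤ D^t * (t * (G+1))^m := by gcongr; nlinarith
        _ = _ := by ring
    exact_mod_cast h4
  have h4 : (1:ℝ) / (G+1)^m ≤ 0 :=
    ge_of_tendsto h2 (Filter.eventually_atTop.mpr ⟨1, h3⟩)
  have : (0:ℝ) < 1 / (G+1)^m := by positivity
  linarith

/-- exponents of total degree at most d -/
abbrev Exps (m d : ℕ) : Type := {b : Fin m →₀ ℕ // b.degree ≤ d}
/-- exponents of weighted degree at most d -/
abbrev WExps (m d : ℕ) : Type := {b : Fin m →₀ ℕ // ∑ j : Fin m, ((j : ℕ) + 1) * b j ≤ d}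

lemma exps_inj (m d : ℕ) : Function.Injective
    (fun (b : Exps m d) (j : Fin m) => (⟨b.1 j, Nat.lt_succ_of_le ((Finsupp.le_degree j b.1).trans b.2)⟩ : Fin (d+1))) := by
  intro b c h
  ext j
  have := congrFun h j
  simpa using this

instance exps_finite (m d : ℕ) : Finite (Exps m d) := Finite.of_injective _ (exps_inj m d)

lemma wexps_le (m d : ℕ) (b : WExps m d) : b.1.degree ≤ d := by
  refine le_trans ?_ b.2
  rw [Finsupp.degree_eq_sum]
  exact Finset.sum_le_sum fun j _ => by nlinarith

instance wexps_finite (m d : ℕ) : Finite (WExps m d) :=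
  Finite.of_injective (fun b : WExps m d => (⟨b.1, wexps_le m d b⟩ : Exps m d)) (by
    intro b c h; exact Subtype.ext (congrArg (fun p => p.1) h))

lemma exps_card_le (m d : ℕ) : Nat.card (Exps m d) ≤ (d+1)^m := by
  have := Nat.card_le_card_of_injective _ (exps_inj m d)
  simpa using this

lemma exps_card_zero (m : ℕ) : 1 ≤ Nat.card (Exps m 0) := by
  have : Nonempty (Exps m 0) := ⟨⟨0, by simp⟩⟩
  exact Nat.card_pos

lemma exps_card_le_wexps (m d : ℕ) :
    Nat.card (Exps m d) ≤ m.factorial * Nat.card (WExps m d) := by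
  let g : Exps m d → (∀ j : Fin m, Fin ((j:ℕ)+1)) × WExps m d := fun b =>
    (fun j => ⟨b.1 j % (j+1), Nat.mod_lt _ (Nat.succ_pos _)⟩,
      ⟨Finsupp.equivFunOnFinite.symm (fun j => b.1 j / (j+1)), by
        refine le_trans ?_ b.2
        rw [Finsupp.degree_eq_sum]
        exact Finset.sum_le_sum fun j _ => by
          simpa using Nat.mul_div_le _ _⟩)
  have hg : Function.Injective g := by
    intro b c h
    ext j
    have h1 := congrArg Prod.fst h
    have h2 := congrArg (fun p => p.2.1 j) h
    have h1 := congrFun h1 j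
    simp only [g, Fin.mk.injEq] at h1
    simp only [g, Finsupp.equivFunOnFinite_symm_apply_apply] at h2
    rw [← Nat.div_add_mod (b.1 j) (j+1), h1, h2, Nat.div_add_mod]
  have := Nat.card_le_card_of_injective g hg
  rw [Nat.card_prod, Nat.card_pi] at this
  simp only [Nat.card_eq_fintype_card, Fintype.card_fin] at this
  rw [Fin.prod_univ_eq_prod_range (fun j => j + 1), Finset.prod_range_add_one_eq_factorial] at this
  simpa using this

lemma finrank_restrict (F : Type*) [Field F] (m d : ℕ) :
    Module.Finite F (MvPolynomial.restrictTotalDegree (Fin m) F d) ∧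
    Module.finrank F (MvPolynomial.restrictTotalDegree (Fin m) F d) = Nat.card (Exps m d) := by
  let b := MvPolynomial.basisRestrictSupport F {n : Fin m →₀ ℕ | n.degree ≤ d}
  have hf : Finite {n : Fin m →₀ ℕ | n.degree ≤ d} := exps_finite m d
  exact ⟨Module.Finite.of_basis b, Module.finrank_eq_nat_card_basis b⟩

lemma minpoly_degree_bound {F A : Type*} [Field F] [CommRing A] [IsDomain A] [Algebra F A] {m : ℕ}
    [Algebra (MvPolynomial (Fin m) F) A] [IsScalarTower F (MvPolynomial (Fin m) F) A]
    [Module.IsTorsionFree (MvPolynomial (Fin m) F) A] (Fil : ℕ → Submodule F A)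
    (hfin : ∀ d, Module.Finite F (Fil d) ∧ Module.finrank F (Fil d) = Nat.card (Exps m d))
    (hone : 1 ∈ Fil 0) (hmono : Monotone Fil)
    (hmul : ∀ a b x y, x ∈ Fil a → y ∈ Fil b → x * y ∈ Fil (a + b))
    (hf : ∀ j : Fin m, algebraMap (MvPolynomial (Fin m) F) A (MvPolynomial.X j) ∈ Fil (j + 1))
    (h : A) (g : ℕ) (hg : h ∈ Fil g) (hint : IsIntegral (MvPolynomial (Fin m) F) h) :
    (minpoly (MvPolynomial (Fin m) F) h).natDegree ≤ m.factorial := by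
  by_contra hcon
  rw [not_le] at hcon
  set D := m.factorial with hD
  have hpow : ∀ (a : ℕ) (x : A), x ∈ Fil a → ∀ t, x ^ t ∈ Fil (t * a) := by
    intro a x hx t
    induction t with
    | zero => simpa using hone
    | succ t ih => rw [pow_succ, add_mul, one_mul]; exact hmul _ _ _ _ ih hx
  have hprod : ∀ (s : Finset (Fin m)) (a : Fin m → ℕ) (x : Fin m → A), (∀ j, x j ∈ Fil (a j)) →
      ∏ j ∈ s, x j ∈ Fil (∑ j ∈ s, a j) := by
    intro s a x hx
    induction s using Finset.induction_on with
    | empty => simpa using hone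
    | insert j s hj ih =>
      rw [Finset.prod_insert hj, Finset.sum_insert hj]; exact hmul _ _ _ _ (hx j) ih
  refine growth_contra (fun d => Nat.card (Exps m d)) D (D * g) m (exps_card_zero m)
    (exps_card_le m) (Nat.factorial_pos m) fun u => ?_
  suffices hs : (D + 1) * Nat.card (WExps m u) ≤ Nat.card (Exps m (u + D * g)) by
    have := exps_card_le_wexps m u
    calc (D+1) * Nat.card (Exps m u) ≤ (D+1) * (D * Nat.card (WExps m u)) := by gcongr
      _ = D * ((D+1) * Nat.card (WExps m u)) := by ring
      _ ≤ _ := by gcongr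
  have l1 : LinearIndependent F (fun a : WExps m u => (MvPolynomial.monomial a.1 (1:F) : MvPolynomial (Fin m) F)) := by
    have := (MvPolynomial.basisMonomials (Fin m) F).linearIndependent
    exact this.comp (fun a : WExps m u => a.1) Subtype.val_injective
  have l2 : LinearIndependent (MvPolynomial (Fin m) F) (fun i : Fin (D+1) => h ^ (i:ℕ)) := by
    rw [Fintype.linearIndependent_iff]
    intro c hc
    let p : (MvPolynomial (Fin m) F)[X] := ∑ i : Fin (D+1), C (c i) * X ^ (i:ℕ)
    have hp : aeval h p = 0 := by
      rw [← hc]; simp [p, Algebra.smul_def]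
    have hp0 : p = 0 := by
      by_contra hp0
      have h1 := minpoly.IsIntegrallyClosed.degree_le_of_ne_zero hp0 hp
      have h2 : p.degree < (D+1 : ℕ) := by
        refine lt_of_le_of_lt (degree_sum_le _ _) ?_
        rw [Finset.sup_lt_iff (by exact WithBot.bot_lt_coe _)]
        intro i _
        refine lt_of_le_of_lt (degree_C_mul_X_pow_le _ _) ?_
        exact_mod_cast i.2
      have h3 := h1.trans_lt h2
      rw [degree_eq_natDegree (minpoly.ne_zero hint)] at h3
      have : (minpoly (MvPolynomial (Fin m) F) h).natDegree < D + 1 := by exact_mod_cast h3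
      omega
    intro i
    have := congrArg (fun q => q.coeff (i:ℕ)) hp0
    simp only [p, finsetSum_coeff, coeff_C_mul, coeff_X_pow, coeff_zero] at this
    rw [Finset.sum_eq_single i] at this
    · simpa using this
    · intro j _ hj
      rw [if_neg (fun h => hj (Fin.ext h.symm)), mul_zero]
    · simp
  have l3 := linearIndependent_smul l1 l2
  have hmem : ∀ p : WExps m u × Fin (D+1),
      (MvPolynomial.monomial p.1.1 (1:F) : MvPolynomial (Fin m) F) • h ^ (p.2:ℕ) ∈ Fil (u + D * g) := by
    rintro ⟨a, i⟩
    rw [Algebra.smul_def]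
    refine hmul _ _ _ _ ?_ ?_
    · refine hmono a.2 ?_
      rw [MvPolynomial.monomial_eq, Finsupp.prod_fintype _ _ (by simp)]
      simp only [map_one, one_mul, map_prod, map_pow]
      refine hprod _ _ _ fun j => ?_
      rw [mul_comm]
      exact hpow _ _ (hf j) _
    · have := i.2
      exact hmono (Nat.mul_le_mul_right g (by omega)) (hpow _ _ hg _)
  let w : WExps m u × Fin (D+1) → Fil (u + D * g) := fun p => ⟨_, hmem p⟩
  have l4 : LinearIndependent F w := LinearIndependent.of_comp (Fil (u + D * g)).subtype l3
  have := (hfin (u + D * g)).1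
  have := Fintype.ofFinite (WExps m u)
  have l5 := l4.fintype_card_le_finrank
  rw [(hfin (u + D * g)).2] at l5
  rw [Fintype.card_prod, Fintype.card_fin] at l5
  rw [Nat.card_eq_fintype_card (α := WExps m u), mul_comm]; exact l5

lemma wpoly_eq_of_totalDegree {F : Type*} [Field F] {m : ℕ} (s : Finset (Fin m)) (e : Fin m → ℕ) :
    ∀ i t, ∑ j ∈ s, e j ≤ i + t →
      ((∏ j ∈ s, (X - C (MvPolynomial.X j : MvPolynomial (Fin m) F)) ^ (e j)).coeff i).totalDegree
        ≤ t := by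
  have hstep : ∀ (N : ℕ) (p : (MvPolynomial (Fin m) F)[X]) (j : Fin m), p.natDegree ≤ N →
      (∀ i t, N ≤ i + t → (p.coeff i).totalDegree ≤ t) →
      ((X - C (MvPolynomial.X j : MvPolynomial (Fin m) F)) * p).natDegree ≤ N + 1 ∧
      (∀ i t, N + 1 ≤ i + t → (((X - C (MvPolynomial.X j : MvPolynomial (Fin m) F)) *
        p).coeff i).totalDegree ≤ t) := by
    intro N p j hp h
    constructor
    · refine natDegree_mul_le.trans ?_
      rw [natDegree_X_sub_C]; omega
    · intro i t hit
      rw [sub_mul, coeff_sub, coeff_C_mul]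
      refine (MvPolynomial.totalDegree_sub _ _).trans (max_le ?_ ?_)
      · cases i with
        | zero => simp
        | succ i => rw [coeff_X_mul]; exact h _ _ (by omega)
      · cases t with
        | zero => rw [coeff_eq_zero_of_natDegree_lt (by omega)]; simp
        | succ t =>
          refine (MvPolynomial.totalDegree_mul _ _).trans ?_
          rw [MvPolynomial.totalDegree_X]
          have := h i t (by omega)
          omega
  suffices h : (∏ j ∈ s, (X - C (MvPolynomial.X j : MvPolynomial (Fin m) F)) ^ (e j)).natDegree
      ≤ ∑ j ∈ s, e j ∧ _ from h.2
  induction s using Finset.induction_on with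
  | empty =>
    refine ⟨by simp, fun i t _ => ?_⟩
    rw [Finset.prod_empty, coeff_one]
    split_ifs <;> simp
  | insert a s ha ih =>
    rw [Finset.prod_insert ha, Finset.sum_insert ha]
    generalize e a = E
    induction E with
    | zero => simpa using ih
    | succ E ih2 =>
      have := hstep _ _ a ih2.1 ih2.2
      rw [pow_succ', mul_assoc, show E + 1 + ∑ j ∈ s, e j = E + ∑ j ∈ s, e j + 1 by ring]
      exact this

lemma exists_separating {F : Type*} [Field F] [Infinite F] {m : ℕ} (T : Finset (Fin m → F)) :
    ∃ h : MvPolynomial (Fin m) F, Set.InjOn (fun r => MvPolynomial.eval r h) T := by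
  let q : (Fin m → F) → F[X] := fun r => ∑ i : Fin m, C (r i) * X ^ (i:ℕ)
  have hq : Function.Injective q := by
    intro r s h
    ext i
    have := congrArg (fun p => p.coeff (i:ℕ)) h
    simp only [q, finsetSum_coeff, coeff_C_mul, coeff_X_pow] at this
    simpa [Fin.val_inj] using this
  let W : F[X] := ∏ p ∈ T.offDiag, (q p.1 - q p.2)
  have hW : W ≠ 0 := by
    rw [Finset.prod_ne_zero_iff]
    intro p hp
    rw [Finset.mem_offDiag] at hp
    exact sub_ne_zero.mpr fun h => hp.2.2 (hq h)
  obtain ⟨t, ht⟩ : ∃ t, W.eval t ≠ 0 := by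
    by_contra! h
    exact hW (Polynomial.funext (by simpa using h))
  refine ⟨∑ i : Fin m, MvPolynomial.C (t ^ (i:ℕ)) * MvPolynomial.X i, ?_⟩
  intro r hr s hs h
  by_contra hne
  apply ht
  rw [eval_prod]
  refine Finset.prod_eq_zero (i := (r, s)) (Finset.mem_offDiag.mpr ⟨hr, hs, hne⟩) ?_
  simp only [map_sum, map_mul, MvPolynomial.eval_C, MvPolynomial.eval_X] at h
  simp only [q, eval_sub, eval_finsetSum, eval_mul, eval_C, eval_pow, eval_X]
  rw [sub_eq_zero]
  simpa [mul_comm] using h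

lemma fiber_bound {F B A ι : Type*} [Field F] [CommRing B] [CommRing A] [Algebra B A]
    (h : A) (hint : IsIntegral B h) (D : ℕ) (hD : (minpoly B h).natDegree ≤ D) (ev : B →+* F)
    (T : Finset ι) (ρ : ι → A →+* F) (hρ : ∀ s ∈ T, (ρ s).comp (algebraMap B A) = ev)
    (hinj : Set.InjOn (fun s => ρ s h) T) : T.card ≤ D := by
  set Q := (minpoly B h).map ev
  have hQ : Q.Monic := (minpoly.monic hint).map ev
  have h1 : T.image (fun s => ρ s h) ⊆ Q.roots.toFinset := by
    intro y hy
    obtain ⟨s, hs, rfl⟩ := Finset.mem_image.mp hy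
    rw [Multiset.mem_toFinset, mem_roots hQ.ne_zero, IsRoot, eval_map, ← hρ s hs,
      ← hom_eval₂, ← aeval_def, minpoly.aeval, map_zero]
  rw [← Finset.card_image_of_injOn hinj]
  calc _ ≤ _ := Finset.card_le_card h1
    _ ≤ _ := Multiset.toFinset_card_le _
    _ ≤ _ := card_roots' _
    _ ≤ _ := natDegree_map_le
    _ ≤ D := hD

/-- the coefficient polynomials -/
noncomputable def fco (F : Type*) [Field F] {m : ℕ} (n : ℕ) (e : Fin m → ℕ) (j : Fin m) :
    MvPolynomial (Fin m) F :=
  (wpoly e (fun i => (MvPolynomial.X i : MvPolynomial (Fin m) F))).coeff (n - 1 - j)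

lemma fco_integral {F : Type*} [Field F] {m n : ℕ}
    (hn : ∀ t : ℕ, 1 ≤ t → t ≤ n → (t : F) ≠ 0)
    (e : Fin m → ℕ) (he : ∀ i, 1 ≤ e i) (hs : ∑ i, e i = n) (h : MvPolynomial (Fin m) F) :
    (MvPolynomial.aeval (fco F n e) :
      MvPolynomial (Fin m) F →ₐ[F] MvPolynomial (Fin m) F).toRingHom.IsIntegralElem h := by
  set φ := (MvPolynomial.aeval (fco F n e) :
      MvPolynomial (Fin m) F →ₐ[F] MvPolynomial (Fin m) F).toRingHom with hφ
  have hC : ∀ a : F, φ (MvPolynomial.C a) = MvPolynomial.C a := by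
    intro a; simp [hφ]
  induction h using MvPolynomial.induction_on with
  | C a => rw [← hC]; exact RingHom.isIntegralElem_map φ
  | add p q hp hq => exact RingHom.IsIntegralElem.add φ hp hq
  | mul_X p i hp =>
    refine RingHom.IsIntegralElem.mul φ hp ?_
    let E := FractionRing (MvPolynomial (Fin m) F)
    let ι : MvPolynomial (Fin m) F →+* E := algebraMap _ E
    have hι : Function.Injective ι := IsFractionRing.injective _ _
    let S : Subring E := (ι.comp φ).range
    have hmem : ι (MvPolynomial.X i) ∈ (integralClosure (Subring.closure (S : Set E)) E).toSubring := by
      rw [← iInf_valuationSubring_superset, Subring.mem_iInf]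
      rintro ⟨V, hV⟩
      refine mem_valuation V (n := n) ?_ e he hs (fun i => ι (MvPolynomial.X i)) ?_ i
      · intro t h1 h2
        have h3 : (t : E) = ι (φ (MvPolynomial.C (t:F))) := by simp
        have h4 : ι (φ (MvPolynomial.C (t:F))) * ι (φ (MvPolynomial.C (t:F)⁻¹)) = 1 := by
          rw [← map_mul, ← map_mul, ← map_mul, mul_inv_cancel₀ (hn t h1 h2)]; simp
        rw [h3]
        refine ⟨left_ne_zero_of_mul_eq_one h4, ?_⟩
        rw [← eq_inv_of_mul_eq_one_right h4]
        exact hV ⟨_, rfl⟩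
      · intro j
        rw [← wpoly_map, coeff_map]
        refine hV ⟨MvPolynomial.X j, ?_⟩
        simp [hφ, fco]
    rw [Subring.closure_eq] at hmem
    obtain ⟨p, hp1, hp2⟩ : IsIntegral S (ι (MvPolynomial.X i)) := hmem
    have hsurj : Function.Surjective (ι.comp φ).rangeRestrict := RingHom.rangeRestrict_surjective _
    obtain ⟨q, hq1, -, hq2⟩ := lifts_and_degree_eq_and_monic
      ((map_surjective _ hsurj) p |> fun ⟨q, hq⟩ => (mem_lifts _).mpr ⟨q, hq⟩) hp1
    refine ⟨q, hq2, hι ?_⟩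
    rw [hom_eval₂, map_zero, ← hp2, ← hq1, eval₂_map]
    rfl

lemma fco_injective {F : Type*} [Field F] {m n : ℕ}
    (hn : ∀ t : ℕ, 1 ≤ t → t ≤ n → (t : F) ≠ 0)
    (e : Fin m → ℕ) (he : ∀ i, 1 ≤ e i) (hs : ∑ i, e i = n) :
    AlgebraicIndependent F (fco F n e) := by
  have halg : Algebra.IsIntegral (Algebra.adjoin F (Set.range (fco F n e)))
      (MvPolynomial (Fin m) F) := by
    refine ⟨fun h => ?_⟩
    obtain ⟨p, hp1, hp2⟩ := fco_integral hn e he hs h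
    let ψ : MvPolynomial (Fin m) F →+* Algebra.adjoin F (Set.range (fco F n e)) :=
      (MvPolynomial.aeval (fun j => (⟨fco F n e j, Algebra.subset_adjoin ⟨j, rfl⟩⟩ :
        Algebra.adjoin F (Set.range (fco F n e))))).toRingHom
    refine ⟨p.map ψ, hp1.map _, ?_⟩
    rw [eval₂_map, ← hp2]
    congr 1
    refine MvPolynomial.ringHom_ext (fun r => ?_) (fun j => ?_)
    · simp [ψ]
    · simp [ψ]
  have : Algebra.IsAlgebraic (Algebra.adjoin F (Set.range (fco F n e)))
      (MvPolynomial (Fin m) F) := halg.isAlgebraic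
  refine (Algebra.IsAlgebraic.isTranscendenceBasis_of_lift_le_trdeg_of_finite F (fco F n e) ?_).1
  rw [MvPolynomial.trdeg_of_isDomain]
  simp

theorem fiber_key {F : Type*} [Field F] [Infinite F] {m n : ℕ}
    (hn : ∀ t : ℕ, 1 ≤ t → t ≤ n → (t : F) ≠ 0)
    (e : Fin m → ℕ) (he : ∀ i, 1 ≤ e i) (hs : ∑ i, e i = n) (c : Fin m → F)
    (T : Finset (Fin m → F))
    (hT : ∀ r ∈ T, ∀ j : Fin m, (wpoly e r).coeff (n - 1 - j) = c j) :
    T.card ≤ m.factorial := by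
  obtain ⟨h, hh⟩ := exists_separating T
  have hmn : m ≤ n := by
    rw [← hs]
    calc m = ∑ i : Fin m, 1 := by simp
      _ ≤ _ := Finset.sum_le_sum fun i _ => he i
  let φ := (MvPolynomial.aeval (fco F n e) :
      MvPolynomial (Fin m) F →ₐ[F] MvPolynomial (Fin m) F)
  let alg : Algebra (MvPolynomial (Fin m) F) (MvPolynomial (Fin m) F) := φ.toRingHom.toAlgebra
  have tow : @IsScalarTower F (MvPolynomial (Fin m) F) (MvPolynomial (Fin m) F) _ alg.toSMul _ := by
    refine @IsScalarTower.of_algebraMap_eq F (MvPolynomial (Fin m) F) (MvPolynomial (Fin m) F)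
      _ _ _ _ alg _ fun x => ?_
    exact (φ.commutes x).symm
  have hint : @IsIntegral (MvPolynomial (Fin m) F) (MvPolynomial (Fin m) F) _ _ alg h :=
    fco_integral hn e he hs h
  have tf : @Module.IsTorsionFree (MvPolynomial (Fin m) F) (MvPolynomial (Fin m) F) _ _ alg.toModule := by
    have : @FaithfulSMul (MvPolynomial (Fin m) F) (MvPolynomial (Fin m) F) alg.toSMul := by
      refine (@faithfulSMul_iff_algebraMap_injective _ _ _ _ alg).mpr ?_
      exact fco_injective hn e he hs
    exact Module.isTorsionFree_iff_faithfulSMul.mpr this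
  refine @fiber_bound F (MvPolynomial (Fin m) F) (MvPolynomial (Fin m) F) (Fin m → F) _ _ _ alg h
    hint _ ?_ (MvPolynomial.eval c) T (fun r => MvPolynomial.eval r) ?_ hh
  · refine @minpoly_degree_bound F (MvPolynomial (Fin m) F) _ _ _ _ m alg tow tf
      (fun d => MvPolynomial.restrictTotalDegree (Fin m) F d) (finrank_restrict F m)
      ?_ ?_ ?_ ?_ h h.totalDegree ?_ hint
    · rw [MvPolynomial.mem_restrictTotalDegree]; simp
    · intro a b hab x hx
      rw [MvPolynomial.mem_restrictTotalDegree] at hx ⊢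
      omega
    · intro a b x y hx hy
      rw [MvPolynomial.mem_restrictTotalDegree] at hx hy ⊢
      have := MvPolynomial.totalDegree_mul x y
      omega
    · intro j
      rw [MvPolynomial.mem_restrictTotalDegree]
      have h1 : φ (MvPolynomial.X j) = fco F n e j := by simp [φ]
      change (φ (MvPolynomial.X j)).totalDegree ≤ _
      rw [h1]
      have := j.2
      exact wpoly_eq_of_totalDegree Finset.univ e _ _ (by omega)
    · rw [MvPolynomial.mem_restrictTotalDegree]
  · intro r hr
    refine MvPolynomial.ringHom_ext (fun x => ?_) (fun j => ?_)
    · change MvPolynomial.eval r (φ (MvPolynomial.C x)) = _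
      simp [φ]
    · change MvPolynomial.eval r (φ (MvPolynomial.X j)) = _
      simp only [φ, MvPolynomial.aeval_X, MvPolynomial.eval_X, fco]
      rw [← hT r hr j, ← coeff_map, wpoly_map]
      simp

lemma parts_recover (M : Multiset ℕ) (hM : ∀ x ∈ M, 1 ≤ x) :
    Multiset.card ((M.map (fun x => x - 1)).filter (fun x => x ≠ 0)) ≤ Multiset.card M ∧
    ((M.map (fun x => x - 1)).filter (fun x => x ≠ 0)).map (fun x => x + 1) +
      Multiset.replicate (Multiset.card M -
        Multiset.card ((M.map (fun x => x - 1)).filter (fun x => x ≠ 0))) 1 = M := by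
  induction M using Multiset.induction_on with
  | empty => simp
  | cons a M ih =>
    obtain ⟨h1, h2⟩ := ih (fun x hx => hM x (Multiset.mem_cons_of_mem hx))
    have ha := hM a (Multiset.mem_cons_self _ _)
    rw [Multiset.map_cons]
    by_cases h : a = 1
    · subst h
      rw [Multiset.filter_cons_of_neg _ (by simp), Multiset.card_cons]
      refine ⟨by omega, ?_⟩
      rw [Nat.sub_add_comm h1, Multiset.replicate_succ, Multiset.add_cons, h2]
    · rw [Multiset.filter_cons_of_pos _ (by omega), Multiset.card_cons, Multiset.card_cons,
        Multiset.map_cons]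
      refine ⟨by omega, ?_⟩
      rw [Nat.add_sub_add_right, Multiset.cons_add, h2, Nat.sub_add_cancel ha]

lemma exists_fun_of_multiset {m : ℕ} (M : Multiset ℕ) (hM : Multiset.card M = m) :
    ∃ e : Fin m → ℕ, (Finset.univ : Finset (Fin m)).val.map e = M := by
  induction M using Quotient.inductionOn with
  | h l =>
    have hl : l.length = m := by simpa using hM
    subst hl
    refine ⟨l.get, ?_⟩
    rw [Fin.univ_val_map, List.ofFn_get]
    rfl

lemma exists_matching {m : ℕ} {F : Type*} (d : Finset F) (g : F → ℕ) (e : Fin m → ℕ)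
    (h : (Finset.univ : Finset (Fin m)).val.map e = d.val.map g) :
    ∃ σ : Fin m ≃ d, ∀ i, g (σ i) = e i := by
  have hc : ∀ v, Nonempty ({i : Fin m // e i = v} ≃ {x : d // g x = v}) := by
    intro v
    rw [← Fintype.card_eq]
    have h1 := congrArg (Multiset.count v) h
    rw [Multiset.count_map, Multiset.count_map] at h1
    have h2 : Fintype.card {x : d // g x = v} = (d.filter (fun x => v = g x)).card := by
      rw [Fintype.card_subtype, ← Finset.card_map (Function.Embedding.subtype _)]
      congr 1
      ext x
      simp [eq_comm, and_comm]
    rw [h2, Fintype.card_subtype]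
    simp only [eq_comm (b := v)]
    rw [Finset.card_def, Finset.card_def, Finset.filter_val, Finset.filter_val]
    convert h1
  refine ⟨Equiv.ofFiberEquiv (f := e) (g := fun x : d => g x) (fun v => (hc v).some), fun i => ?_⟩
  exact Equiv.ofFiberEquiv_map (f := e) (g := fun x : d => g x) (fun v => (hc v).some) i

lemma exists_pattern {F : Type*} [Field F] [IsAlgClosed F] {n k : ℕ} (hk : 1 ≤ k) (hkn : k < n)
    (E : {p : Nat.Partition k // Multiset.card p.parts ≤ n - k} → Fin (n - k) → ℕ)
    (hE : ∀ p, (Finset.univ : Finset (Fin (n-k))).val.map (E p) = p.1.parts.map (fun x => x + 1) +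
      Multiset.replicate (n - k - Multiset.card p.1.parts) 1)
    (R : F[X]) (hR : R.Monic) (hdeg : R.natDegree = n)
    (hidx : n - R.roots.toFinset.card = k) :
    ∃ p, ∃ r : Fin (n - k) → F, R = wpoly (E p) r := by
  have hsplit : R.Splits := IsAlgClosed.splits R
  have hcard : Multiset.card R.roots = n := by rw [← hdeg]; exact hsplit.natDegree_eq_card_roots.symm
  set d := R.roots.toFinset with hd
  have hdc : d.card = n - k := by
    have : d.card ≤ n := by rw [← hcard]; exact Multiset.toFinset_card_le _
    omega
  set g : F → ℕ := fun x => R.rootMultiplicity x with hg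
  have hg1 : ∀ x ∈ d, 1 ≤ g x := by
    intro x hx
    rw [hg]; simp only
    rw [← count_roots]
    exact Multiset.one_le_count_iff_mem.mpr (Multiset.mem_toFinset.mp hx)
  have hgs : ∑ x ∈ d, g x = n := by
    rw [← hcard, ← Multiset.toFinset_sum_count_eq]
    exact Finset.sum_congr rfl fun x _ => (count_roots _).symm
  set M := d.val.map g with hM
  have hMc : Multiset.card M = n - k := by rw [hM, Multiset.card_map]; exact hdc
  have hM1 : ∀ x ∈ M, 1 ≤ x := by
    intro x hx
    obtain ⟨y, hy, rfl⟩ := Multiset.mem_map.mp hx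
    exact hg1 y hy
  have hl : (M.map (fun x => x - 1)).sum = k := by
    rw [hM, Multiset.map_map]
    change ∑ x ∈ d, (g x - 1) = k
    rw [Finset.sum_tsub_distrib _ hg1, hgs, Finset.sum_const, hdc]
    simp only [smul_eq_mul, mul_one]; omega
  obtain ⟨hr1, hr2⟩ := parts_recover M hM1
  let p : Nat.Partition k := Nat.Partition.ofSums k _ hl
  have hpp : p.parts = (M.map (fun x => x - 1)).filter (fun x => x ≠ 0) := by
    simp only [p, Nat.Partition.ofSums]
  rw [← hpp, hMc] at hr1 hr2
  have hEp := hE ⟨p, hr1⟩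
  simp only [hr2] at hEp
  obtain ⟨σ, hσ⟩ := exists_matching d g (E ⟨p, hr1⟩) hEp
  refine ⟨⟨p, hr1⟩, fun i => σ i, ?_⟩
  have h1 := hsplit.eq_prod_roots_of_monic hR
  rw [prod_multiset_root_eq_finset_root] at h1
  rw [wpoly]
  refine h1.trans ?_
  rw [← Finset.prod_coe_sort]
  refine (Fintype.prod_equiv σ _ _ fun i => ?_).symm
  rw [← hσ i]

section coeffs
variable {K : Type*} [Field K] {n k : ℕ}

lemma sum1_coeff (hkn : k < n) (a : Fin (n - k) → K) (j : Fin (n - k)) :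
    (∑ i : Fin (n - k), C (a i) * X ^ (n - 1 - (i : ℕ))).coeff (n - 1 - j) = a j := by
  rw [finsetSum_coeff, Finset.sum_eq_single j]
  · simp
  · intro i _ hij
    rw [coeff_C_mul, coeff_X_pow, if_neg, mul_zero]
    have := i.2; have := j.2
    intro h; apply hij; ext; omega
  · simp

lemma sum1_coeff' (a : Fin (n - k) → K) (t : ℕ) (ht : t < k ∨ n ≤ t) :
    (∑ i : Fin (n - k), C (a i) * X ^ (n - 1 - (i : ℕ))).coeff t = 0 := by
  rw [finsetSum_coeff]
  refine Finset.sum_eq_zero fun i _ => ?_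
  rw [coeff_C_mul, coeff_X_pow, if_neg, mul_zero]
  have := i.2
  omega

lemma sum2_coeff (b : Fin k → K) (j : Fin k) :
    (∑ i : Fin k, C (b i) * X ^ (k - 1 - (i : ℕ))).coeff (k - 1 - j) = b j := by
  rw [finsetSum_coeff, Finset.sum_eq_single j]
  · simp
  · intro i _ hij
    rw [coeff_C_mul, coeff_X_pow, if_neg, mul_zero]
    have := i.2; have := j.2
    intro h; apply hij; ext; omega
  · simp

lemma sum2_coeff' (b : Fin k → K) (t : ℕ) (ht : k ≤ t) :
    (∑ i : Fin k, C (b i) * X ^ (k - 1 - (i : ℕ))).coeff t = 0 := by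
  rw [finsetSum_coeff]
  refine Finset.sum_eq_zero fun i _ => ?_
  rw [coeff_C_mul, coeff_X_pow, if_neg, mul_zero]
  have := i.2
  omega

end coeffs

/-- Proposition 3.3 of Bhargava's paper. Let `K` be a field of characteristic zero or
greater than `n` (so prime to `n!`), let `1 ≤ k < n`, and fix `a_1, ..., a_{n-k} ∈ K`.
Then the number of tuples `(a_{n-k+1}, ..., a_n) ∈ K^k` such that
`P(x) = x^n + a_1 x^{n-1} + ... + a_n` has index exactly `k` over `K` is at most
`q(k, n-k)·(n-k)!`, where `q(k, n-k)` is the number of partitions of `k` into at most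
`n-k` parts. -/
theorem index_k_fiber_count (K : Type*) [Field K] (n k : ℕ)
    (hchar : ringChar K = 0 ∨ n < ringChar K) (hk : 1 ≤ k) (hkn : k < n)
    (a : Fin (n - k) → K) :
    {b : Fin k → K | polyIndexOver K
        (X ^ n + ∑ i : Fin (n - k), C (a i) * X ^ (n - 1 - (i : ℕ)) +
          ∑ j : Fin k, C (b j) * X ^ (k - 1 - (j : ℕ))) = k}.Finite ∧
      {b : Fin k → K | polyIndexOver K
        (X ^ n + ∑ i : Fin (n - k), C (a i) * X ^ (n - 1 - (i : ℕ)) +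
          ∑ j : Fin k, C (b j) * X ^ (k - 1 - (j : ℕ))) = k}.ncard
        ≤ Nat.card {p : Nat.Partition k // Multiset.card p.parts ≤ n - k} *
            Nat.factorial (n - k) := by
  have hFn : ∀ t : ℕ, 1 ≤ t → t ≤ n → (t : AlgebraicClosure K) ≠ 0 := by
    intro t h1 h2 h3
    have h4 : (t : K) = 0 := by
      apply (algebraMap K (AlgebraicClosure K)).injective
      rw [map_natCast, map_zero, h3]
    rw [ringChar.spec] at h4
    rcases hchar with h | h
    · rw [h, zero_dvd_iff] at h4; omega
    · have := Nat.le_of_dvd (by omega) h4; omega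
  set Pb : (Fin k → K) → K[X] := fun b =>
    X ^ n + ∑ i : Fin (n - k), C (a i) * X ^ (n - 1 - (i : ℕ)) +
          ∑ j : Fin k, C (b j) * X ^ (k - 1 - (j : ℕ)) with hPb
  have hco1 : ∀ b (j : Fin (n-k)), (Pb b).coeff (n - 1 - j) = a j := by
    intro b j
    have := j.2
    rw [hPb]; simp only [coeff_add]
    rw [sum1_coeff hkn, sum2_coeff' _ _ (by omega), coeff_X_pow, if_neg (by omega)]
    simp
  have hco2 : ∀ b (j : Fin k), (Pb b).coeff (k - 1 - j) = b j := by
    intro b j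
    have := j.2
    rw [hPb]; simp only [coeff_add]
    rw [sum2_coeff, sum1_coeff' _ _ (by omega), coeff_X_pow, if_neg (by omega)]
    simp
  have hco3 : ∀ b, (Pb b).coeff n = 1 := by
    intro b
    rw [hPb]; simp only [coeff_add]
    rw [sum2_coeff' _ _ (by omega), sum1_coeff' _ _ (by omega), coeff_X_pow, if_pos rfl]
    simp
  have hco4 : ∀ b t, n < t → (Pb b).coeff t = 0 := by
    intro b t ht
    rw [hPb]; simp only [coeff_add]
    rw [sum2_coeff' _ _ (by omega), sum1_coeff' _ _ (by omega), coeff_X_pow, if_neg (by omega)]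
    simp
  have hdeg : ∀ b, (Pb b).natDegree = n := by
    intro b
    refine le_antisymm (natDegree_le_iff_coeff_eq_zero.mpr (hco4 b)) (le_natDegree_of_ne_zero ?_)
    rw [hco3]; exact one_ne_zero
  have hmonic : ∀ b, (Pb b).Monic := by
    intro b; rw [Monic, leadingCoeff, hdeg, hco3]
  have hexE : ∀ p : {p : Nat.Partition k // Multiset.card p.parts ≤ n - k},
      ∃ e : Fin (n-k) → ℕ, (Finset.univ : Finset (Fin (n-k))).val.map e =
      p.1.parts.map (fun x => x + 1) + Multiset.replicate (n - k - Multiset.card p.1.parts) 1 := by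
    intro p
    apply exists_fun_of_multiset
    have := p.2
    simp; omega
  choose E hE using hexE
  have hE1 : ∀ p i, 1 ≤ E p i := by
    intro p i
    have : E p i ∈ (Finset.univ : Finset (Fin (n-k))).val.map (E p) :=
      Multiset.mem_map_of_mem _ (Finset.mem_univ i)
    rw [hE, Multiset.mem_add] at this
    rcases this with h | h
    · obtain ⟨x, _, hx⟩ := Multiset.mem_map.mp h; omega
    · rw [Multiset.eq_of_mem_replicate h]
  have hEs : ∀ p, ∑ i, E p i = n := by
    intro p
    have h2 := p.2
    change ((Finset.univ : Finset (Fin (n-k))).val.map (E p)).sum = n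
    rw [hE, Multiset.sum_add, Multiset.sum_map_add]
    simp [p.1.parts_sum]; omega
  let Z : {p : Nat.Partition k // Multiset.card p.parts ≤ n - k} →
      Set (Fin (n-k) → AlgebraicClosure K) := fun p =>
    {r | ∀ j : Fin (n-k), (wpoly (E p) r).coeff (n - 1 - j) = algebraMap K _ (a j)}
  have hZb : ∀ p (T : Finset (Fin (n-k) → AlgebraicClosure K)), (T : Set _) ⊆ Z p →
      T.card ≤ (n-k).factorial := fun p T hT =>
    fiber_key hFn (E p) (hE1 p) (hEs p) (fun j => algebraMap K _ (a j)) T fun r hr => hT hr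
  have hZf : ∀ p, (Z p).Finite := by
    intro p
    by_contra hinf
    obtain ⟨T, hT, hTc⟩ := Set.Infinite.exists_subset_card_eq hinf ((n-k).factorial + 1)
    have := hZb p T hT
    omega
  have hZc : ∀ p, (Z p).ncard ≤ (n-k).factorial := by
    intro p
    rw [Set.ncard_eq_toFinset_card _ (hZf p)]
    exact hZb p _ (by simp)
  let S : {p : Nat.Partition k // Multiset.card p.parts ≤ n - k} → Set (Fin k → K) := fun p =>
    {b | ∃ r, (Pb b).map (algebraMap K (AlgebraicClosure K)) = wpoly (E p) r}
  have hS : ∀ p, (S p).Finite ∧ (S p).ncard ≤ (n-k).factorial := by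
    intro p
    let f : (Fin k → K) → (Fin (n-k) → AlgebraicClosure K) := fun b =>
      if h : b ∈ S p then h.choose else 0
    have hf : ∀ b ∈ S p, (Pb b).map (algebraMap K (AlgebraicClosure K)) = wpoly (E p) (f b) := by
      intro b hb
      simp only [f, dif_pos hb]
      exact hb.choose_spec
    have hfZ : Set.MapsTo f (S p) (Z p) := by
      intro b hb j
      rw [← hf b hb, coeff_map, hco1]
    have hinj : Set.InjOn f (S p) := by
      intro b hb c hc h
      have h1 : (Pb b).map (algebraMap K (AlgebraicClosure K)) =
          (Pb c).map (algebraMap K (AlgebraicClosure K)) := by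
        rw [hf b hb, hf c hc, h]
      have h2 := map_injective _ (algebraMap K (AlgebraicClosure K)).injective h1
      ext j
      rw [← hco2 b, ← hco2 c, h2]
    exact ⟨Set.Finite.of_injOn hfZ hinj (hZf p),
      (Set.ncard_le_ncard_of_injOn f hfZ hinj (hZf p)).trans (hZc p)⟩
  have hsub : {b : Fin k → K | polyIndexOver K (Pb b) = k} ⊆ ⋃ p, S p := by
    intro b hb
    rw [Set.mem_ofPred_eq, polyIndexOver, hdeg] at hb
    obtain ⟨p, r, hr⟩ := exists_pattern hk hkn E hE
      ((Pb b).map (algebraMap K (AlgebraicClosure K))) ((hmonic b).map _)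
      ((natDegree_map _).trans (hdeg b)) hb
    exact Set.mem_iUnion.mpr ⟨p, r, hr⟩
  have hfin : (⋃ p, S p).Finite := Set.finite_iUnion fun p => (hS p).1
  refine ⟨hfin.subset hsub, ?_⟩
  calc _ ≤ (⋃ p, S p).ncard := Set.ncard_le_ncard hsub hfin
    _ ≤ ∑ p, (S p).ncard := Set.ncard_iUnion_le_of_fintype _
    _ ≤ ∑ _p : {p : Nat.Partition k // Multiset.card p.parts ≤ n - k}, (n-k).factorial :=
      Finset.sum_le_sum fun p _ => (hS p).2
    _ = _ := by simp [Nat.card_eq_fintype_card]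
end

section
/- Fix n ≥ 1, an integer k ≥ 0, and ε > 0. There is a constant C = C(n, ε) such that for every prime p and every real H ≥ 1, the number of tuples (a_1,...,a_n) ∈ ℤ^n with |a_i| ≤ H for all i, such that the reduction modulo p of x^n + a_1 x^{n-1} + ... + a_n has index at least k over 𝔽_p, is at most C · (H^n / p^k + p^{n - k - 1/2 + ε}). -/
open scoped Classical
open Polynomial

theorem stepanov {p : ℕ} [Fact p.Prime] {K : Type*} [Field K] [IsAlgClosed K] [CharP K p]
    (f : K[X]) (d : ℕ) (hd : f.natDegree = d) (hpd : Nat.Coprime p d)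
    (a : K) (c : ℕ) (hc : p ^ c + d + 1 < p ^ (c+1)) (s : Finset K)
    (hs : ∀ x ∈ s, x ^ (p ^ (2*(c+1))) = x ∧
      ∑ i ∈ Finset.range (2*(c+1)), (f.eval x) ^ (p^i) = a) :
    s.card ≤ p ^ (2*c+1) + (2*d+1) * p^(c+1) := by
  have hp : p.Prime := Fact.out
  set D := p ^ c with hD
  set r := p ^ (c+1) with hr
  have hrD : r = p * D := by rw [hr, hD, pow_succ]; ring
  have hDpos : 0 < D := pow_pos hp.pos _
  have hrpos : 0 < r := pow_pos hp.pos _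
  set z : K[X] := ∑ i ∈ Finset.range (c+1), f ^ (p^i) with hz
  have hd0 : 0 < d := by
    rcases Nat.eq_zero_or_pos d with h | h
    · subst h; simp at hpd; exact absurd hpd hp.one_lt.ne'
    · exact h
  have hf0 : f ≠ 0 := by rintro rfl; simp at hd; omega
  have hzdeg : z.natDegree = d * D := by
    rw [hz, Finset.sum_range_succ, natDegree_add_eq_right_of_natDegree_lt, natDegree_pow, hd, mul_comm]
    rw [natDegree_pow, hd]
    refine lt_of_le_of_lt (natDegree_sum_le_of_forall_le (n := (D - 1) * d) _ _ ?_) ?_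
    · intro i hi
      rw [natDegree_pow, hd]
      have : p^i < D := Nat.pow_lt_pow_right hp.one_lt (Finset.mem_range.1 hi)
      exact Nat.mul_le_mul_right _ (by omega)
    · exact Nat.mul_lt_mul_of_pos_right (by omega) hd0
  have hz0 : z ≠ 0 := by
    rintro h; rw [h] at hzdeg; simp at hzdeg; omega
  set I := D + d + 1 with hI
  let ι := Fin I × Fin p × Fin D
  set E := D * r + I + d * r with hE
  have hcard : Fintype.card ι = r * I := by
    simp only [ι, Fintype.card_prod, Fintype.card_fin, hrD]; ring
  let v : ι → degreeLT K E := fun t => ⟨X ^ (t.2.2.1 * r + t.1.1) * (C a - z) ^ t.2.1.1, by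
    rw [mem_degreeLT]
    have h1 : (X ^ (t.2.2.1 * r + t.1.1) * (C a - z) ^ t.2.1.1).natDegree ≤
        (t.2.2.1 * r + t.1.1) + t.2.1.1 * (d * D) := by
      refine natDegree_mul_le.trans (add_le_add (by simp) ?_)
      refine natDegree_pow_le.trans (Nat.mul_le_mul_left _ ?_)
      refine (natDegree_sub_le _ _).trans ?_
      simp [hzdeg]
    refine lt_of_le_of_lt degree_le_natDegree ?_
    norm_cast
    refine lt_of_le_of_lt h1 ?_
    have e1 : t.2.2.1 * r ≤ D * r := Nat.mul_le_mul_right _ t.2.2.2.le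
    have e2 := t.1.2
    have e3 : t.2.1.1 * (d * D) ≤ p * (d * D) := Nat.mul_le_mul_right _ t.2.1.2.le
    have e4 : p * (d * D) = d * r := by rw [hrD]; ring
    omega⟩
  have hnli : ¬ LinearIndependent K v := by
    intro h
    have := h.fintype_card_le_finrank
    rw [hcard, (degreeLTEquiv K E).finrank_eq, Module.finrank_fin_fun] at this
    have : r * I = D * r + d * r + r := by rw [hI]; ring
    omega
  rw [Fintype.not_linearIndependent_iff] at hnli
  obtain ⟨w, hw, t0, ht0⟩ := hnli
  replace hw : ∑ t : ι, C (w t) * (X ^ (t.2.2.1 * r + t.1.1) * (C a - z) ^ t.2.1.1) = 0 := by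
    have := congrArg (Submodule.subtype _) hw
    simpa [v, map_sum, smul_eq_C_mul] using this
  have hroot : ∀ u : K, ∃ y, y ^ r = u := fun u => IsAlgClosed.exists_pow_nat_eq u hrpos
  choose R hR using hroot
  let term : ι → K[X] := fun t => C (R (w t)) * (X ^ (t.2.2.1 + t.1.1 * r) * z ^ t.2.1.1)
  let G : K[X] := ∑ t : ι, term t
  have hRne : ∀ u, u ≠ 0 → R u ≠ 0 := by
    intro u hu h; apply hu; rw [← hR u, h, zero_pow hrpos.ne']
  have hdeg : ∀ t, term t ≠ 0 → (term t).natDegree = D * (p * t.1.1 + d * t.2.1.1) + t.2.2.1 := by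
    intro t ht
    have hR0 : R (w t) ≠ 0 := by intro h; apply ht; simp [term, h]
    simp only [term]
    rw [natDegree_C_mul hR0, natDegree_mul (by simp) (pow_ne_zero _ hz0), natDegree_X_pow,
      natDegree_pow, hzdeg, hrD]; ring
  have hinj : ∀ t t' : ι, D * (p * t.1.1 + d * t.2.1.1) + t.2.2.1 =
      D * (p * t'.1.1 + d * t'.2.1.1) + t'.2.2.1 → t = t' := by
    rintro ⟨⟨i, hi⟩, ⟨j, hj⟩, ⟨k, hk⟩⟩ ⟨⟨i', hi'⟩, ⟨j', hj'⟩, ⟨k', hk'⟩⟩ h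
    simp only at h
    have hkk : k = k' := by
      have := congrArg (· % D) h
      simpa [Nat.mul_add_mod, Nat.mod_eq_of_lt hk, Nat.mod_eq_of_lt hk'] using this
    subst hkk
    have h2 : p * i + d * j = p * i' + d * j' := Nat.eq_of_mul_eq_mul_left hDpos (by omega)
    have hjj : j = j' := by
      have h3 : d * j ≡ d * j' [MOD p] := by
        have := congrArg (· % p) h2
        show _ % _ = _ % _
        simpa [Nat.mul_add_mod] using this
      have h4 := Nat.ModEq.cancel_left_of_coprime hpd h3
      exact Nat.ModEq.eq_of_lt_of_lt h4 hj hj'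
    subst hjj
    have : i = i' := Nat.eq_of_mul_eq_mul_left hp.pos (by omega)
    subst this; rfl
  have hGne : G ≠ 0 := by
    intro hG
    have h1 := degree_sum_eq_of_disjoint term Finset.univ (by
      intro t ht t' ht' hne heq
      apply hne
      apply hinj
      rw [← hdeg t ht.2, ← hdeg t' ht'.2]
      exact natDegree_eq_of_degree_eq heq)
    have h2 : ∑ t : ι, term t = 0 := hG
    rw [h2, degree_zero] at h1
    have h3 : (term t0).degree ≤ ⊥ := by
      rw [h1]; exact Finset.le_sup (f := fun i => (term i).degree) (Finset.mem_univ t0)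
    have h4 : term t0 = 0 := degree_eq_bot.1 (le_bot_iff.1 h3)
    simp only [term, mul_eq_zero, C_eq_zero] at h4
    rcases h4 with h4 | h4 | h4
    · exact hRne _ ht0 h4
    · simp at h4
    · exact pow_ne_zero _ hz0 h4
  have hGdeg : G.natDegree ≤ p ^ (2*c+1) + (2*d+1) * r := by
    refine natDegree_sum_le_of_forall_le _ _ ?_
    intro t _
    by_cases h : term t = 0
    · rw [h]; simp
    rw [hdeg t h]
    have e1 : p ^ (2*c+1) = r * D := by rw [hr, hD]; ring
    rw [e1]
    have e2 : D * (p * t.1.1) ≤ r * (D + d) := by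
      rw [hrD, ← mul_assoc, mul_comm D p]
      exact Nat.mul_le_mul_left _ (by have := t.1.2; omega)
    have e3 : D * (d * t.2.1.1) ≤ d * r := by
      rw [hrD]
      calc D * (d * t.2.1.1) = d * (t.2.1.1 * D) := by ring
        _ ≤ _ := Nat.mul_le_mul_left _ (Nat.mul_le_mul_right _ t.2.1.2.le)
    have e4 := t.2.2.2
    have e5 : D ≤ r := by rw [hrD]; exact Nat.le_mul_of_pos_left _ hp.pos
    nlinarith
  have : ExpChar K p := ExpChar.prime hp
  have hev : ∀ x ∈ s, x ∈ G.roots := by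
    intro x hx
    obtain ⟨hx1, hx2⟩ := hs x hx
    rw [mem_roots hGne, IsRoot.def]
    have hq : r * r = p ^ (2*(c+1)) := by rw [hr]; ring
    have hzx : (z.eval x) ^ r = a - z.eval x := by
      rw [eq_sub_iff_add_eq, ← hx2, two_mul, Finset.sum_range_add, add_comm, hz, eval_finsetSum]
      congr 1
      · simp
      · rw [hr, sum_pow_char_pow]
        refine Finset.sum_congr rfl fun i _ => ?_
        rw [eval_pow, ← pow_mul, ← pow_add, add_comm]
    have : (G.eval x) ^ r = 0 := by
      have h1 := congrArg (eval x) hw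
      rw [eval_zero] at h1
      rw [← h1, eval_finsetSum, eval_finsetSum, hr, sum_pow_char_pow, ← hr]
      refine Finset.sum_congr rfl fun t _ => ?_
      simp only [term, eval_mul, eval_C, eval_pow, eval_X, eval_sub]
      rw [mul_pow, hR, mul_pow]
      congr 2
      · rw [← pow_mul, add_mul, pow_add, pow_add, mul_assoc, hq, mul_comm (t.1.1) (p^_), pow_mul x (p^_), hx1]
      · rw [← pow_mul, mul_comm, pow_mul, hzx]
    exact pow_eq_zero_iff hrpos.ne' |>.1 this
  calc s.card ≤ G.roots.toFinset.card := Finset.card_le_card (fun x hx => by simpa using hev x hx)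
    _ ≤ Multiset.card G.roots := Multiset.toFinset_card_le _
    _ ≤ G.natDegree := card_roots' _
    _ ≤ _ := hGdeg

theorem multiset_newton {R : Type*} [CommRing R] (s : Multiset R) (k : ℕ) :
    (k : R) * s.esymm k = (-1) ^ (k + 1) *
      ∑ a ∈ Finset.HasAntidiagonal.antidiagonal k with a.1 < k,
        (-1) ^ a.1 * s.esymm a.1 * (s.map (· ^ a.2)).sum := by
  obtain ⟨l, rfl⟩ := Quot.exists_rep s
  change (k : R) * (l : Multiset R).esymm k = (-1) ^ (k + 1) *
      ∑ a ∈ Finset.HasAntidiagonal.antidiagonal k with a.1 < k,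
        (-1) ^ a.1 * (l : Multiset R).esymm a.1 * ((l : Multiset R).map (· ^ a.2)).sum
  have h := congrArg (MvPolynomial.aeval (R := R) (fun i : Fin l.length => l.get i))
    (MvPolynomial.mul_esymm_eq_sum (Fin l.length) R k)
  have hl : (Finset.univ.val.map (fun i : Fin l.length => l.get i)) = (l : Multiset R) := by
    rw [Fin.univ_val_map, List.ofFn_get]
  have hps : ∀ m, MvPolynomial.aeval (R := R) (fun i : Fin l.length => l.get i)
      (MvPolynomial.psum (Fin l.length) R m) = ((l : Multiset R).map (· ^ m)).sum := by
    intro m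
    rw [← hl, Multiset.map_map]
    simp [MvPolynomial.psum, List.sum_ofFn]
  simp only [map_mul, map_natCast, map_sum, map_pow, map_neg, map_one,
    MvPolynomial.aeval_esymm_eq_multiset_esymm, hl, hps] at h
  exact h

theorem esymm_bound (s : Multiset ℂ) (B : ℝ) (hB : 0 ≤ B)
    (h : ∀ j, 1 ≤ j → ‖(s.map (· ^ j)).sum‖ ≤ B ^ j) (k : ℕ) : ‖s.esymm k‖ ≤ B ^ k := by
  induction k using Nat.strong_induction_on with
  | _ k ih =>
    rcases Nat.eq_zero_or_pos k with rfl | hk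
    · simp [Multiset.esymm]
    have h1 := congrArg norm (multiset_newton s k)
    rw [norm_mul, norm_mul, norm_pow, norm_neg, norm_one, one_pow, one_mul, Complex.norm_natCast] at h1
    have h2 : (k : ℝ) * ‖s.esymm k‖ ≤ k * B ^ k := by
      rw [h1]
      refine (norm_sum_le _ _).trans ?_
      have : ∀ a ∈ (Finset.HasAntidiagonal.antidiagonal k).filter (fun a : ℕ × ℕ => a.1 < k),
          ‖(-1) ^ a.1 * s.esymm a.1 * (s.map (· ^ a.2)).sum‖ ≤ B ^ k := by
        intro a ha
        rw [Finset.mem_filter, Finset.HasAntidiagonal.mem_antidiagonal] at ha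
        rw [norm_mul, norm_mul, norm_pow, norm_neg, norm_one, one_pow, one_mul]
        calc _ ≤ B ^ a.1 * B ^ a.2 := mul_le_mul (ih _ ha.2) (h _ (by omega)) (norm_nonneg _) (pow_nonneg hB _)
          _ = B ^ k := by rw [← pow_add, ha.1]
      refine (Finset.sum_le_card_nsmul _ _ _ this).trans ?_
      rw [nsmul_eq_mul]
      refine mul_le_mul_of_nonneg_right ?_ (pow_nonneg hB _)
      norm_cast
      have : (Finset.filter (fun a : ℕ × ℕ => a.1 < k) (Finset.HasAntidiagonal.antidiagonal k)).card ≤ (Finset.range k).card := by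
        refine Finset.card_le_card_of_injOn Prod.fst ?_ ?_
        · intro a ha; simp at ha ⊢; exact ha.2
        · intro a ha b hb hab
          simp at ha hb
          ext <;> omega
      simpa using this
    exact le_of_mul_le_mul_left h2 (by exact_mod_cast hk)

theorem root_bound (s : Multiset ℂ) (B : ℝ) (hB : 0 ≤ B)
    (h : ∀ j, 1 ≤ j → ‖(s.map (· ^ j)).sum‖ ≤ B ^ j) (z : ℂ) (hz : z ∈ s) : ‖z‖ ≤ 2 * B := by
  by_contra hlt
  push Not at hlt
  have hzpos : 0 < ‖z‖ := by linarith
  have h0 : (s.map (fun t => X - C t)).prod.eval z = 0 := by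
    rw [eval_multiset_prod, Multiset.map_map]
    apply Multiset.prod_eq_zero
    rw [Multiset.mem_map]
    exact ⟨z, hz, by simp⟩
  rw [Multiset.prod_X_sub_X_eq_sum_esymm, eval_finsetSum, Finset.sum_range_succ'] at h0
  set n := s.card with hn
  have h3 : ‖z‖ ^ n ≤ ∑ k ∈ Finset.range n, B ^ (k+1) * ‖z‖ ^ (n - (k+1)) := by
    have : z ^ n = - ∑ k ∈ Finset.range n, (-1) ^ (k+1) * (s.esymm (k+1) * z ^ (n - (k+1))) := by
      rw [eq_neg_iff_add_eq_zero, add_comm]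
      have e0 : s.esymm 0 = 1 := by simp [Multiset.esymm]
      simpa [e0] using h0
    rw [← norm_pow, this, norm_neg]
    refine (norm_sum_le _ _).trans (Finset.sum_le_sum fun k _ => ?_)
    rw [norm_mul, norm_mul, norm_pow, norm_neg, norm_one, one_pow, one_mul, norm_pow]
    exact mul_le_mul_of_nonneg_right (esymm_bound s B hB h _) (by positivity)
  have h4 : ∀ m, ∑ k ∈ Finset.range m, B ^ (k+1) * ‖z‖ ^ (n - (k+1)) ≤ ‖z‖^n * (1 - (1/2)^m) ∨ n < m := by
    intro m
    induction m with
    | zero => left; simp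
    | succ m ih =>
      rcases ih with ih | ih
      · by_cases hm : n < m+1
        · right; exact hm
        left
        rw [Finset.sum_range_succ]
        have e1 : B ^ (m+1) ≤ (‖z‖/2)^(m+1) := pow_le_pow_left₀ hB (by linarith) _
        have e2 : B ^ (m+1) * ‖z‖ ^ (n - (m+1)) ≤ ‖z‖^n * (1/2)^(m+1) := by
          calc _ ≤ (‖z‖/2)^(m+1) * ‖z‖ ^ (n - (m+1)) := mul_le_mul_of_nonneg_right e1 (by positivity)
            _ = (‖z‖^(m+1) * ‖z‖ ^ (n - (m+1))) * (1/2)^(m+1) := by rw [div_eq_mul_one_div, mul_pow]; ring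
            _ = _ := by rw [← pow_add]; congr 2; omega
        have e3 : (1/2:ℝ)^(m+1) = (1/2)^m / 2 := by rw [pow_succ]; ring
        rw [e3] at e2 ⊢
        nlinarith
      · right; omega
  have h5 : 0 < ‖z‖^n := by positivity
  have h6 : (0:ℝ) < (1/2)^n := by positivity
  rcases h4 n with h4 | h4
  · nlinarith
  · omega

theorem lfun_bound (a S : ℕ → ℂ) (d : ℕ) (ha0 : a 0 = 1) (had : ∀ m, d ≤ m → a m = 0)
    (hrec : ∀ m : ℕ, (m : ℂ) * a m = ∑ x ∈ Finset.HasAntidiagonal.antidiagonal m with x.1 < m, a x.1 * S x.2)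
    (ρ C : ℝ) (hρ : 0 < ρ) (c0 : ℕ) (hS : ∀ c, c0 ≤ c → ‖S (2 * c)‖ ≤ C * ρ ^ c) :
    ‖S 1‖ ≤ d * Real.sqrt ρ := by
  have hd0 : d ≠ 0 := by rintro rfl; have := had 0 le_rfl; rw [ha0] at this; exact one_ne_zero this
  let Q : ℂ[X] := X ^ d + ∑ i ∈ Finset.range d, Polynomial.C (a (d - i)) * X ^ i
  have hlow : (∑ i ∈ Finset.range d, Polynomial.C (a (d - i)) * X ^ i : ℂ[X]).degree < d := by
    refine (degree_sum_le _ _).trans_lt ?_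
    refine (Finset.sup_lt_iff (WithBot.bot_lt_coe d)).2 ?_
    intro i hi
    exact (degree_C_mul_X_pow_le _ _).trans_lt (WithBot.coe_lt_coe.2 (Finset.mem_range.1 hi))
  have hQm : Q.Monic := monic_X_pow_add hlow
  have hQd : Q.natDegree = d := by
    apply natDegree_eq_of_degree_eq_some
    simp only [Q]
    rw [degree_add_eq_left_of_degree_lt, degree_X_pow]
    rw [degree_X_pow]; exact hlow
  set s := Q.roots with hs
  have hcard : s.card = d := by
    rw [hs, ← hQd]; exact splits_iff_card_roots.1 (IsAlgClosed.splits Q)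
  have hes : ∀ m, a m = (-1)^m * s.esymm m := by
    intro m
    by_cases hm : m ≤ d
    · have h1 := coeff_eq_esymm_roots_of_splits (IsAlgClosed.splits Q) (k := d - m) (by omega)
      rw [hQm.leadingCoeff, hQd, one_mul, Nat.sub_sub_self hm] at h1
      rw [← hs] at h1
      rw [← h1]
      simp only [Q, coeff_add, coeff_X_pow, finsetSum_coeff, coeff_C_mul]
      rcases Nat.eq_zero_or_pos m with rfl | hm0
      · simp only [Nat.sub_zero, if_true, ha0]
        rw [Finset.sum_eq_zero]; · simp
        intro i hi
        rw [if_neg (by have := Finset.mem_range.1 hi; omega), mul_zero]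
      · rw [if_neg (by omega), Finset.sum_eq_single (d - m)]
        · simp [Nat.sub_sub_self hm]
        · intro b _ hb; rw [if_neg (by omega), mul_zero]
        · intro h; exact absurd (Finset.mem_range.2 (by omega)) h
    · rw [had m (by omega), Multiset.esymm, Multiset.powersetCard_eq_empty _ (by omega)]
      simp
  have hSp : ∀ m, 1 ≤ m → S m = -(s.map (· ^ m)).sum := by
    intro m
    induction m using Nat.strong_induction_on with
    | _ m ih =>
      intro hm
      have h1 := hrec m
      have h2 := multiset_newton s m
      have h3 : (m : ℂ) * a m = ∑ x ∈ Finset.HasAntidiagonal.antidiagonal m with x.1 < m, a x.1 * (-(s.map (· ^ x.2)).sum) := by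
        rw [hes m, mul_left_comm, h2, ← mul_assoc, ← pow_add, Finset.mul_sum]
        refine Finset.sum_congr rfl fun x _ => ?_
        rw [hes x.1]
        have : (-1 : ℂ) ^ (m + (m+1)) = -1 := by
          rw [show m + (m+1) = 2 * m + 1 by ring, pow_succ, pow_mul]; simp
        rw [this]; ring
      rw [h3] at h1
      have hmem : (0, m) ∈ Finset.filter (fun x : ℕ × ℕ => x.1 < m) (Finset.HasAntidiagonal.antidiagonal m) := by
        simp; omega
      rw [← Finset.add_sum_erase _ _ hmem, ← Finset.add_sum_erase _ _ hmem] at h1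
      have h4 : ∑ x ∈ (Finset.filter (fun x : ℕ × ℕ => x.1 < m) (Finset.HasAntidiagonal.antidiagonal m)).erase (0, m),
          a x.1 * (-(s.map (· ^ x.2)).sum) = ∑ x ∈ (Finset.filter (fun x : ℕ × ℕ => x.1 < m) (Finset.HasAntidiagonal.antidiagonal m)).erase (0, m),
          a x.1 * S x.2 := by
        refine Finset.sum_congr rfl fun x hx => ?_
        rw [Finset.mem_erase, Finset.mem_filter, Finset.HasAntidiagonal.mem_antidiagonal] at hx
        obtain ⟨hx0, hx1, hx2⟩ := hx
        have : x.1 ≠ 0 := by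
          intro h; apply hx0; ext <;> simp <;> omega
        rw [ih x.2 (by omega) (by omega)]
      rw [h4, ha0] at h1
      have := add_right_cancel h1
      simpa using this.symm
  have hω : ∀ z ∈ s, ‖z‖ ≤ Real.sqrt ρ := by
    intro z hz
    apply Real.le_sqrt_of_sq_le
    by_contra hlt
    push Not at hlt
    set C' := max C 1
    have hC' : 1 ≤ C' := le_max_right _ _
    have key : ∀ c, c0 + 1 ≤ c → ‖z‖ ^ (2*c) ≤ 2 * (C' * ρ ^ c) := by
      intro c hc
      have := root_bound (s.map (· ^ (2*c))) (C' * ρ^c) (by positivity) (by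
        intro j hj
        rw [Multiset.map_map]
        have e1 := hSp (2 * c * j) (by nlinarith)
        have e2 := hS (c * j) (by nlinarith)
        rw [← mul_assoc, e1, norm_neg] at e2
        have e3 : (s.map ((· ^ j) ∘ (· ^ (2*c)))) = s.map (· ^ (2 * c * j)) := by
          refine Multiset.map_congr rfl fun x _ => ?_
          simp [pow_mul]
        rw [e3]
        refine e2.trans ?_
        rw [mul_pow, ← pow_mul]
        refine mul_le_mul_of_nonneg_right ?_ (by positivity)
        exact (le_max_left _ _).trans (le_self_pow₀ hC' (by omega))) (z ^ (2*c)) (Multiset.mem_map_of_mem _ hz)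
      rwa [norm_pow] at this
    have hgt : 1 < ‖z‖^2 / ρ := by rwa [one_lt_div hρ]
    obtain ⟨N, hN⟩ := pow_unbounded_of_one_lt (2 * C') hgt
    have k1 := key (N + c0 + 1) (by omega)
    have k2 : (‖z‖^2/ρ)^N ≤ (‖z‖^2/ρ)^(N+c0+1) := pow_le_pow_right₀ hgt.le (by omega)
    rw [div_pow (n := N + c0 + 1), le_div_iff₀ (by positivity), ← pow_mul] at k2
    have : 2 * C' * ρ^(N+c0+1) < (‖z‖^2/ρ)^N * ρ^(N+c0+1) := by
      exact mul_lt_mul_of_pos_right hN (by positivity)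
    linarith
  rw [hSp 1 le_rfl, norm_neg]
  simp only [pow_one, Multiset.map_id']
  calc ‖s.sum‖ ≤ (s.map (fun z => ‖z‖)).sum := norm_multiset_sum_le s
    _ ≤ (s.map (fun z => ‖z‖)).card • Real.sqrt ρ := by
      apply Multiset.sum_le_card_nsmul
      intro x hx
      rw [Multiset.mem_map] at hx
      obtain ⟨z, hz, rfl⟩ := hx
      exact hω z hz
    _ = _ := by rw [Multiset.card_map, hcard, nsmul_eq_mul]

section PartC

theorem orbit_count_one {α : Type*} (φ : α → α) (hφ : Function.Injective φ) (s : Multiset α)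
    (hs : s.map φ = s) (x : α) (hx : x ∈ s) :
    ((Finset.Icc 1 (Multiset.card s)).filter (fun j => φ^[j] x = x ∧
      (Multiset.range j).map (fun i => φ^[i] x) ≤ s)).card = s.count x := by
  have hcount : ∀ i, s.count (φ^[i] x) = s.count x := by
    intro i
    induction i with
    | zero => rfl
    | succ i ih =>
      rw [Function.iterate_succ_apply', ← ih]
      conv_lhs => rw [← hs]
      exact Multiset.count_map_eq_count' φ s hφ _
  have hper : x ∈ Function.periodicPts φ := by
    have hni : ¬ Function.Injective (fun i : ℕ => (⟨φ^[i] x, by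
        rw [Multiset.mem_toFinset, ← Multiset.count_pos, hcount, Multiset.count_pos]; exact hx⟩ : s.toFinset)) :=
      not_injective_infinite_finite _
    have hni' : ∃ i j : ℕ, φ^[i] x = φ^[j] x ∧ i ≠ j := by
      by_contra hcon
      push Not at hcon
      exact hni fun i j hij => hcon i j (congrArg Subtype.val hij)
    obtain ⟨i, j, hij, hne⟩ := hni'
    have key : ∀ i j, i < j → φ^[i] x = φ^[j] x → x ∈ Function.periodicPts φ := by
      intro i j hlt h
      refine ⟨j - i, by omega, ?_⟩
      have : φ^[i] (φ^[j-i] x) = φ^[i] x := by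
        rw [← Function.iterate_add_apply, h]; congr 2; omega
      exact hφ.iterate i this
    rcases lt_or_gt_of_ne hne with h | h
    · exact key _ _ h hij
    · exact key _ _ h hij.symm
  set e := Function.minimalPeriod φ x with he
  have hepos : 0 < e := Function.minimalPeriod_pos_of_mem_periodicPts hper
  let O : Multiset α := (Multiset.range e).map (fun i => φ^[i] x)
  have hOnd : O.Nodup := by
    refine Multiset.Nodup.map_on ?_ (Multiset.nodup_range e)
    intro i hi j hj hij
    exact Function.iterate_injOn_Iio_minimalPeriod (Multiset.mem_range.1 hi) (Multiset.mem_range.1 hj) hij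
  have hO : ∀ k, (Multiset.range (e * k)).map (fun i => φ^[i] x) = k • O := by
    intro k
    induction k with
    | zero => simp
    | succ k ih =>
      rw [Nat.mul_succ, Multiset.range_add, Multiset.map_add, ih, succ_nsmul, Multiset.map_map]
      congr 1
      refine Multiset.map_congr rfl fun i _ => ?_
      simp only [Function.comp]
      rw [add_comm, Function.iterate_add_apply]
      congr 1
      exact (Function.isPeriodicPt_minimalPeriod φ x).mul_const k
  have hxO : x ∈ O := Multiset.mem_map.2 ⟨0, by simpa using hepos, rfl⟩
  have hle : ∀ k, k • O ≤ s ↔ k ≤ s.count x := by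
    intro k
    constructor
    · intro h
      have := Multiset.count_le_of_le x h
      rwa [Multiset.count_nsmul, Multiset.count_eq_one_of_mem hOnd hxO, mul_one] at this
    · intro h
      rw [Multiset.le_iff_count]
      intro y
      rw [Multiset.count_nsmul]
      by_cases hy : y ∈ O
      · rw [Multiset.count_eq_one_of_mem hOnd hy, mul_one]
        obtain ⟨i, _, rfl⟩ := Multiset.mem_map.1 hy
        rw [hcount]; exact h
      · rw [Multiset.count_eq_zero_of_notMem hy]; simp
  have : (Finset.Icc 1 (Multiset.card s)).filter (fun j => φ^[j] x = x ∧
      (Multiset.range j).map (fun i => φ^[i] x) ≤ s) = (Finset.Icc 1 (s.count x)).image (fun k => e * k) := by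
    ext j
    simp only [Finset.mem_filter, Finset.mem_Icc, Finset.mem_image]
    constructor
    · rintro ⟨⟨h1, h2⟩, h3, h4⟩
      have h5 : e ∣ j := Function.IsPeriodicPt.minimalPeriod_dvd h3
      obtain ⟨k, rfl⟩ := h5
      rw [hO, hle] at h4
      refine ⟨k, ⟨?_, h4⟩, rfl⟩
      rcases Nat.eq_zero_or_pos k with rfl | hk
      · simp at h1
      · exact hk
    · rintro ⟨k, ⟨h1, h2⟩, rfl⟩
      have h3 := (hle k).2 h2
      have h4 := Multiset.card_le_card h3
      rw [← hO, Multiset.card_map, Multiset.card_range] at h4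
      refine ⟨⟨by nlinarith, h4⟩, (Function.isPeriodicPt_minimalPeriod φ x).mul_const k, ?_⟩
      rw [hO]; exact h3
  rw [this, Finset.card_image_of_injective _ (fun a b h => Nat.eq_of_mul_eq_mul_left hepos h)]
  simp

section
variable {p : ℕ} [Fact p.Prime] {K : Type*} [Field K] [Algebra (ZMod p) K] [CharP K p]

theorem fixed_mem (x : K) (hx : x ^ p = x) : ∃ t : ZMod p, algebraMap (ZMod p) K t = x := by
  have hp : p.Prime := Fact.out
  have hne : (X ^ p - X : K[X]) ≠ 0 := FiniteField.X_pow_card_sub_X_ne_zero K hp.one_lt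
  have hinj : Function.Injective (algebraMap (ZMod p) K) := (algebraMap (ZMod p) K).injective
  have hsub : (Finset.univ : Finset (ZMod p)).image (algebraMap (ZMod p) K) ⊆ (X ^ p - X : K[X]).roots.toFinset := by
    intro y hy
    obtain ⟨t, _, rfl⟩ := Finset.mem_image.1 hy
    rw [Multiset.mem_toFinset, mem_roots hne]
    simp [IsRoot.def, ← map_pow, ZMod.pow_card]
  have hcard : (X ^ p - X : K[X]).roots.toFinset.card ≤ ((Finset.univ : Finset (ZMod p)).image (algebraMap (ZMod p) K)).card := by
    rw [Finset.card_image_of_injective _ hinj, Finset.card_univ, ZMod.card]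
    refine (Multiset.toFinset_card_le _).trans ((card_roots' _).trans ?_)
    rw [FiniteField.X_pow_card_sub_X_natDegree_eq K hp.one_lt]
  have heq := Finset.eq_of_subset_of_card_le hsub hcard
  have hmem : x ∈ (X ^ p - X : K[X]).roots.toFinset := by
    rw [Multiset.mem_toFinset, mem_roots hne]; simp [IsRoot.def, hx]
  rw [← heq] at hmem
  obtain ⟨t, _, h⟩ := Finset.mem_image.1 hmem
  exact ⟨t, h⟩

theorem lift_multiset (s : Multiset K) (hs : s.map (frobenius K p) = s) :
    ∃ g : (ZMod p)[X], g.Monic ∧ g.natDegree = Multiset.card s ∧ g.aroots K = s := by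
  have hmon : ((s.map (fun a => X - C a)).prod : K[X]).Monic := monic_multisetProd_X_sub_C s
  have hl : ((s.map (fun a => X - C a)).prod : K[X]) ∈ lifts (algebraMap (ZMod p) K) := by
    rw [lifts_iff_coeff_lifts]
    intro n
    apply fixed_mem
    have h1 : ((s.map (fun a => X - C a)).prod : K[X]).map (frobenius K p) = (s.map (fun a => X - C a)).prod := by
      conv_rhs => rw [← hs]
      rw [Polynomial.map_multiset_prod, Multiset.map_map, Multiset.map_map]
      congr 1
      refine Multiset.map_congr rfl fun x _ => ?_
      simp
    have h2 := congrArg (fun q => coeff q n) h1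
    simpa [coeff_map, frobenius_def] using h2
  obtain ⟨g, hg1, hg2, hg3⟩ := lifts_and_natDegree_eq_and_monic hl hmon
  refine ⟨g, hg3, ?_, ?_⟩
  · rw [hg2, natDegree_multiset_prod_X_sub_C_eq_card]
  · rw [aroots, hg1, roots_multiset_prod_X_sub_C]

theorem aroots_frob [IsAlgClosed K] (g : (ZMod p)[X]) : (g.aroots K).map (frobenius K p) = g.aroots K := by
  have h := Polynomial.Splits.roots_map (IsAlgClosed.splits (g.map (algebraMap (ZMod p) K))) (frobenius K p)
  rw [Polynomial.map_map, Subsingleton.elim ((frobenius K p).comp (algebraMap (ZMod p) K)) (algebraMap (ZMod p) K)] at h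
  exact h.symm

theorem card_aroots' [IsAlgClosed K] (g : (ZMod p)[X]) : Multiset.card (g.aroots K) = g.natDegree := by
  rw [aroots, splits_iff_card_roots.1 (IsAlgClosed.splits (g.map (algebraMap (ZMod p) K)))]; simp

theorem monic_finite (p : ℕ) [Fact p.Prime] (m : ℕ) : {g : (ZMod p)[X] | g.Monic ∧ g.natDegree = m}.Finite := by
  have : Finite {g : (ZMod p)[X] // g.Monic ∧ g.natDegree = m} :=
    Finite.of_equiv (Fin m → ZMod p) ((monicEquivDegreeLT m).trans (degreeLTEquiv (ZMod p) m).toEquiv).symm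
  exact Set.finite_coe_iff.1 this

noncomputable def Mon (p : ℕ) [Fact p.Prime] (m : ℕ) : Finset (ZMod p)[X] := (monic_finite p m).toFinset

theorem mem_Mon {m : ℕ} {g : (ZMod p)[X]} : g ∈ Mon p m ↔ g.Monic ∧ g.natDegree = m := by
  simp [Mon]

theorem card_Mon (m : ℕ) : (Mon p m).card = p ^ m := by
  rw [Mon, ← Set.ncard_eq_toFinset_card _ (monic_finite p m), ← Nat.card_coe_set_eq]
  have := Nat.card_congr ((monicEquivDegreeLT (R := ZMod p) m).trans (degreeLTEquiv (ZMod p) m).toEquiv)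
  rw [Nat.card_fun, Nat.card_zmod, Nat.card_fin] at this
  exact this

noncomputable def Rt (p : ℕ) (K : Type*) [Field K] (m : ℕ) : Finset K := (X ^ (p^m) - X : K[X]).roots.toFinset

theorem mem_Rt {m : ℕ} (hm : m ≠ 0) {x : K} : x ∈ Rt p K m ↔ x ^ (p ^ m) = x := by
  have hp : p.Prime := Fact.out
  rw [Rt, Multiset.mem_toFinset, mem_roots (FiniteField.X_pow_card_pow_sub_X_ne_zero K hm hp.one_lt)]
  simp [IsRoot.def, sub_eq_zero]

theorem card_Rt [IsAlgClosed K] {m : ℕ} (hm : m ≠ 0) : (Rt p K m).card = p ^ m := by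
  have hp : p.Prime := Fact.out
  have hsep : (X ^ (p^m) - X : K[X]).Separable := galois_poly_separable p _ (dvd_pow_self p hm)
  rw [Rt, Multiset.toFinset_card_of_nodup (nodup_roots hsep),
    splits_iff_card_roots.1 (IsAlgClosed.splits _), FiniteField.X_pow_card_pow_sub_X_natDegree_eq K hm hp.one_lt]

noncomputable def Phi (Ψ : AddChar K ℂ) (F : K → K) (s : Multiset K) : ℂ := Ψ (s.map F).sum

noncomputable def orb (p : ℕ) (x : K) (j : ℕ) : Multiset K := (Multiset.range j).map (fun i => x ^ (p^i))

noncomputable def aC (p : ℕ) [Fact p.Prime] [Algebra (ZMod p) K] (Ψ : AddChar K ℂ) (F : K → K) (m : ℕ) : ℂ := ∑ g ∈ Mon p m, Phi Ψ F (g.aroots K)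

noncomputable def sC (p : ℕ) (Ψ : AddChar K ℂ) (F : K → K) (m : ℕ) : ℂ := ∑ x ∈ Rt p K m, Phi Ψ F (orb p x m)

theorem Phi_add (Ψ : AddChar K ℂ) (F : K → K) (s t : Multiset K) : Phi Ψ F (s + t) = Phi Ψ F s * Phi Ψ F t := by
  simp [Phi, AddChar.map_add_eq_mul]

theorem orb_frob (x : K) (j : ℕ) (hj : x ^ (p^j) = x) : (orb p x j).map (frobenius K p) = orb p x j := by
  rcases j with _ | j
  · simp [orb]
  rw [orb, Multiset.map_map]
  have h1 : ((frobenius K p) ∘ fun i => x ^ (p^i)) = fun i => x ^ (p^(i+1)) := by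
    ext i; simp [frobenius_def, ← pow_mul, pow_succ]
  rw [h1, Multiset.range_succ, Multiset.map_cons, hj, ← Multiset.range_succ]
  have h2 : Multiset.range (j+1) = 0 ::ₘ (Multiset.range j).map (· + 1) := by
    have := Multiset.range_add 1 j
    rw [add_comm 1 j] at this
    rw [this]
    simp [add_comm, Multiset.range_succ]
  rw [h2, Multiset.map_cons, Multiset.map_map]
  simp

theorem chi_inner_sum [IsAlgClosed K] (Ψ : AddChar K ℂ) (F : K → K) (i j : ℕ) (x : K) (hx : x ^ (p^j) = x) :
    ∑ h ∈ Mon p i, Phi Ψ F (h.aroots K) * Phi Ψ F (orb p x j) =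
      ∑ g ∈ Mon p (i + j), if orb p x j ≤ g.aroots K then Phi Ψ F (g.aroots K) else 0 := by
  obtain ⟨G, hG1, hG2, hG3⟩ := lift_multiset (p := p) (orb p x j) (orb_frob x j hx)
  have hj : Multiset.card (orb p x j) = j := by simp [orb]
  rw [hj] at hG2
  rw [← Finset.sum_filter]
  refine Finset.sum_bij (fun h _ => h * G) ?_ ?_ ?_ ?_
  · intro h hh
    rw [mem_Mon] at hh
    rw [Finset.mem_filter, mem_Mon]
    refine ⟨⟨hh.1.mul hG1, by rw [hh.1.natDegree_mul hG1, hh.2, hG2]⟩, ?_⟩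
    rw [aroots_mul (mul_ne_zero hh.1.ne_zero hG1.ne_zero), hG3]
    exact Multiset.le_add_left _ _
  · intro a _ b _ hab
    exact mul_right_cancel₀ hG1.ne_zero hab
  · intro g hg
    rw [Finset.mem_filter, mem_Mon] at hg
    obtain ⟨⟨hg1, hg2⟩, hg3⟩ := hg
    have hdvd : G ∣ g := by
      rw [← Polynomial.map_dvd_map' (algebraMap (ZMod p) K)]
      have e1 : G.map (algebraMap (ZMod p) K) = ((orb p x j).map (fun a => X - C a)).prod := by
        rw [← hG3]
        have := (IsAlgClosed.splits (G.map (algebraMap (ZMod p) K))).eq_prod_roots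
        rw [(hG1.map _).leadingCoeff, C_1, one_mul] at this
        exact this
      rw [e1, Multiset.prod_X_sub_C_dvd_iff_le_roots (hg1.map _).ne_zero]
      exact hg3
    obtain ⟨h, rfl⟩ := hdvd
    have hhm : h.Monic := hG1.of_mul_monic_left hg1
    refine ⟨h, mem_Mon.2 ⟨hhm, ?_⟩, mul_comm _ _⟩
    rw [hG1.natDegree_mul hhm] at hg2; omega
  · intro h hh
    rw [mem_Mon] at hh
    rw [aroots_mul (mul_ne_zero hh.1.ne_zero hG1.ne_zero), hG3, Phi_add]

theorem count_all [IsAlgClosed K] (m : ℕ) (s : Multiset K) (hs : s.map (frobenius K p) = s) (hc : Multiset.card s = m) :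
    ∑ x ∈ Finset.HasAntidiagonal.antidiagonal m with x.1 < m, ∑ y ∈ Rt p K x.2, (if orb p y x.2 ≤ s then (1:ℂ) else 0) = m := by
  have hit : ∀ (i : ℕ) (x : K), (frobenius K p)^[i] x = x ^ (p^i) := fun i x => iterate_frobenius _ _ _ 
  have h1 : ∑ x ∈ Finset.HasAntidiagonal.antidiagonal m with x.1 < m, ∑ y ∈ Rt p K x.2, (if orb p y x.2 ≤ s then (1:ℂ) else 0)
      = ∑ j ∈ Finset.Icc 1 m, ∑ y ∈ s.toFinset, if y ^ (p^j) = y ∧ orb p y j ≤ s then (1:ℂ) else 0 := by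
    refine Finset.sum_bij (fun x _ => x.2) ?_ ?_ ?_ ?_
    · intro x hx
      rw [Finset.mem_filter, Finset.HasAntidiagonal.mem_antidiagonal] at hx
      rw [Finset.mem_Icc]; omega
    · intro a ha b hb hab
      rw [Finset.mem_filter, Finset.HasAntidiagonal.mem_antidiagonal] at ha hb
      ext <;> omega
    · intro j hj
      rw [Finset.mem_Icc] at hj
      refine ⟨(m - j, j), ?_, rfl⟩
      rw [Finset.mem_filter, Finset.HasAntidiagonal.mem_antidiagonal]
      simp only; omega
    · intro x hx
      rw [Finset.mem_filter, Finset.HasAntidiagonal.mem_antidiagonal] at hx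
      have hx0 : x.2 ≠ 0 := by omega
      rw [← Finset.sum_filter, ← Finset.sum_filter]
      refine Finset.sum_congr ?_ fun _ _ => rfl
      ext y
      simp only [Finset.mem_filter, mem_Rt hx0, Multiset.mem_toFinset]
      constructor
      · rintro ⟨a, b⟩
        refine ⟨Multiset.mem_of_le b ?_, a, b⟩
        exact Multiset.mem_map.2 ⟨0, by rw [Multiset.mem_range]; omega, by simp⟩
      · rintro ⟨_, a, b⟩; exact ⟨a, b⟩
  rw [h1, Finset.sum_comm]
  have h2 : ∀ y ∈ s.toFinset, ∑ j ∈ Finset.Icc 1 m, (if y ^ (p^j) = y ∧ orb p y j ≤ s then (1:ℂ) else 0) = s.count y := by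
    intro y hy
    have := orbit_count_one (frobenius K p) (frobenius_inj K p) s hs y (Multiset.mem_toFinset.1 hy)
    rw [hc] at this
    rw [← this, Finset.card_filter]
    push_cast
    refine Finset.sum_congr rfl fun j _ => ?_
    simp only [hit]; rfl
  rw [Finset.sum_congr rfl h2, ← hc, ← Multiset.toFinset_sum_count_eq]
  push_cast; rfl

theorem recurrence [IsAlgClosed K] (Ψ : AddChar K ℂ) (F : K → K) (m : ℕ) :
    (m : ℂ) * aC p Ψ F m = ∑ x ∈ Finset.HasAntidiagonal.antidiagonal m with x.1 < m, aC p Ψ F x.1 * sC p Ψ F x.2 := by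
  have h1 : ∀ x ∈ (Finset.HasAntidiagonal.antidiagonal m).filter (fun x : ℕ × ℕ => x.1 < m), aC p Ψ F x.1 * sC p Ψ F x.2 =
      ∑ g ∈ Mon p m, ∑ y ∈ Rt p K x.2, (if orb p y x.2 ≤ g.aroots K then (1:ℂ) else 0) * Phi Ψ F (g.aroots K) := by
    intro x hx
    rw [Finset.mem_filter, Finset.HasAntidiagonal.mem_antidiagonal] at hx
    rw [Finset.sum_comm, aC, sC, Finset.mul_sum]
    refine Finset.sum_congr rfl fun y hy => ?_
    rw [mem_Rt (by omega)] at hy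
    rw [Finset.sum_mul, chi_inner_sum Ψ F x.1 x.2 y hy, hx.1]
    refine Finset.sum_congr rfl fun g _ => ?_
    split_ifs <;> simp
  rw [Finset.sum_congr rfl h1, Finset.sum_comm, aC, Finset.mul_sum]
  refine Finset.sum_congr rfl fun g hg => ?_
  rw [mem_Mon] at hg
  rw [← count_all m (g.aroots K) (aroots_frob g) (by rw [card_aroots', hg.2]), Finset.sum_mul]
  refine Finset.sum_congr rfl fun x _ => ?_
  rw [Finset.sum_mul]

theorem aC_zero (Ψ : AddChar K ℂ) (F : K → K) : aC p Ψ F 0 = 1 := by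
  have : Mon p 0 = {1} := by
    ext g; rw [mem_Mon, Finset.mem_singleton]
    constructor
    · rintro ⟨h1, h2⟩; exact h1.natDegree_eq_zero.1 h2
    · rintro rfl; simp
  simp [aC, this, Phi]
end

end PartC

section PartD

theorem psum_diff {R : Type*} [CommRing R] (s s' : Multiset R) (d : ℕ)
    (h : ∀ k, k < d → s'.esymm k = s.esymm k) (k : ℕ) (hk : 1 ≤ k) (hkd : k ≤ d) :
    (s'.map (· ^ k)).sum - (s.map (· ^ k)).sum = (-1) ^ (k+1) * k * (s'.esymm k - s.esymm k) := by
  induction k using Nat.strong_induction_on with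
  | _ k ih =>
    have h1 := multiset_newton s k
    have h2 := multiset_newton s' k
    have hmem : (0, k) ∈ Finset.filter (fun x : ℕ × ℕ => x.1 < k) (Finset.HasAntidiagonal.antidiagonal k) := by
      simp; omega
    rw [← Finset.add_sum_erase _ _ hmem] at h1 h2
    have h4 : ∑ x ∈ (Finset.filter (fun x : ℕ × ℕ => x.1 < k) (Finset.HasAntidiagonal.antidiagonal k)).erase (0, k),
          (-1) ^ x.1 * s'.esymm x.1 * (s'.map (· ^ x.2)).sum = ∑ x ∈ (Finset.filter (fun x : ℕ × ℕ => x.1 < k) (Finset.HasAntidiagonal.antidiagonal k)).erase (0, k),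
          (-1) ^ x.1 * s.esymm x.1 * (s.map (· ^ x.2)).sum := by
      refine Finset.sum_congr rfl fun x hx => ?_
      rw [Finset.mem_erase, Finset.mem_filter, Finset.HasAntidiagonal.mem_antidiagonal] at hx
      obtain ⟨hx0, hx1, hx2⟩ := hx
      have : x.1 ≠ 0 := by
        intro h; apply hx0; ext <;> simp <;> omega
      have e := ih x.2 (by omega) (by omega) (by omega)
      rw [h x.2 (by omega), sub_self, mul_zero, sub_eq_zero] at e
      rw [e, h x.1 (by omega)]
    rw [h4] at h2
    have e0 : s.esymm 0 = 1 := by simp [Multiset.esymm]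
    have e0' : s'.esymm 0 = 1 := by simp [Multiset.esymm]
    simp only [pow_zero, one_mul, e0, e0'] at h1 h2
    have hsq : (-1 : R) ^ (k+1) * (-1) ^ (k+1) = 1 := by
      rw [← mul_pow]; simp
    rw [mul_assoc, mul_sub, h1, h2]
    linear_combination -((s'.map (· ^ k)).sum - (s.map (· ^ k)).sum) * hsq

section
variable {p : ℕ} [Fact p.Prime] {K : Type*} [Field K] [Algebra (ZMod p) K] [CharP K p]

theorem esymm_coeff [IsAlgClosed K] (g : (ZMod p)[X]) (m : ℕ) (hg : g ∈ Mon p m) (k : ℕ) (hk : k ≤ m) :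
    (g.aroots K).esymm k = (-1)^k * algebraMap (ZMod p) K (g.coeff (m - k)) := by
  rw [mem_Mon] at hg
  have h1 := coeff_eq_esymm_roots_of_splits (IsAlgClosed.splits (g.map (algebraMap (ZMod p) K))) (k := m - k)
    (by rw [natDegree_map]; omega)
  rw [(hg.1.map _).leadingCoeff, natDegree_map, hg.2, one_mul, Nat.sub_sub_self hk, coeff_map] at h1
  rw [h1, ← mul_assoc, ← mul_pow]; simp [aroots]

theorem sum_aeval (f : (ZMod p)[X]) (s : Multiset K) :
    (s.map (fun θ => aeval θ f)).sum = ∑ k ∈ Finset.range (f.natDegree + 1), algebraMap (ZMod p) K (f.coeff k) * (s.map (· ^ k)).sum := by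
  simp_rw [aeval_eq_sum_range, Algebra.smul_def]
  rw [Multiset.sum_map_sum]
  refine Finset.sum_congr rfl fun k _ => ?_
  rw [Multiset.sum_map_mul_left]

theorem Phi_shift [IsAlgClosed K] (Ψ : AddChar K ℂ) (f : (ZMod p)[X]) (d : ℕ) (hd : f.natDegree = d) (hd0 : 1 ≤ d)
    (m : ℕ) (hm : d ≤ m) (t : ZMod p) (g : (ZMod p)[X]) (hg : g ∈ Mon p m) (hg' : g + C t * X ^ (m - d) ∈ Mon p m) :
    Phi Ψ (fun θ => aeval θ f) ((g + C t * X ^ (m-d)).aroots K) =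
     Ψ (algebraMap (ZMod p) K (- (f.leadingCoeff * d * t))) * Phi Ψ (fun θ => aeval θ f) (g.aroots K) := by
  rw [Phi, Phi, ← AddChar.map_add_eq_mul]
  congr 1
  rw [sum_aeval, sum_aeval, ← sub_eq_iff_eq_add, ← Finset.sum_sub_distrib, hd, Finset.sum_range_succ]
  have hes : ∀ k, k < d → ((g + C t * X ^ (m-d)).aroots K).esymm k = (g.aroots K).esymm k := by
    intro k hk
    rw [esymm_coeff _ m hg' k (by omega), esymm_coeff _ m hg k (by omega), coeff_add, coeff_C_mul_X_pow, if_neg (by omega), add_zero]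
  have hpd := psum_diff (g.aroots K) ((g + C t * X ^ (m-d)).aroots K) d hes
  rw [Finset.sum_eq_zero, zero_add, ← mul_sub, hpd d hd0 le_rfl, esymm_coeff _ m hg' d hm, esymm_coeff _ m hg d hm,
    coeff_add, coeff_C_mul_X_pow, if_pos rfl, leadingCoeff, hd]
  · simp only [map_add, map_neg, map_mul, map_natCast]
    have : (-1 : K)^(d+1) * (-1)^d = -1 := by
      rw [← pow_add, show d + 1 + d = 2 * d + 1 by ring, pow_succ, pow_mul]; simp
    linear_combination (algebraMap (ZMod p) K (f.coeff d) * d * algebraMap (ZMod p) K t) * this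
  · intro k hk
    rw [Finset.mem_range] at hk
    rcases Nat.eq_zero_or_pos k with rfl | hk0
    · rw [mem_Mon] at hg hg'
      simp only [pow_zero, Multiset.map_const', Multiset.sum_replicate, card_aroots', hg.2, hg'.2, sub_self]
    · rw [← mul_sub, hpd k hk0 hk.le, hes k hk]; simp

theorem aC_vanish [IsAlgClosed K] (Ψ : AddChar K ℂ) (f : (ZMod p)[X]) (d : ℕ) (hd : f.natDegree = d) (hd0 : 1 ≤ d)
    (hpd : Nat.Coprime p d) (hΨ : ∃ u : ZMod p, Ψ (algebraMap (ZMod p) K u) ≠ 1)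
    (m : ℕ) (hm : d ≤ m) : aC p Ψ (fun θ => aeval θ f) m = 0 := by
  obtain ⟨u, hu⟩ := hΨ
  have hf : f.leadingCoeff ≠ 0 := by
    rw [leadingCoeff_ne_zero]; rintro rfl; simp at hd; omega
  have hdp : (d : ZMod p) ≠ 0 := by
    rw [Ne, ZMod.natCast_eq_zero_iff]
    intro h
    have := Nat.dvd_gcd dvd_rfl h
    rw [hpd] at this
    exact (Fact.out : p.Prime).one_lt.ne' (Nat.dvd_one.1 this)
  set t : ZMod p := - (u / (f.leadingCoeff * d)) with ht
  have htu : - (f.leadingCoeff * d * t) = u := by rw [ht]; field_simp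
  have hmem : ∀ (t : ZMod p) (g : (ZMod p)[X]), g ∈ Mon p m → g + C t * X ^ (m-d) ∈ Mon p m := by
    intro t g hg
    rw [mem_Mon] at hg ⊢
    have hlt : (C t * X ^ (m-d)).degree < g.degree := by
      rw [degree_eq_natDegree hg.1.ne_zero, hg.2]
      exact (degree_C_mul_X_pow_le _ _).trans_lt (WithBot.coe_lt_coe.2 (Nat.sub_lt (by omega) (by omega) : m - d < m))
    refine ⟨hg.1.add_of_left hlt, ?_⟩
    rw [natDegree_add_eq_left_of_degree_lt hlt, hg.2]
  have key : aC p Ψ (fun θ => aeval θ f) m = Ψ (algebraMap (ZMod p) K u) * aC p Ψ (fun θ => aeval θ f) m := by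
    conv_rhs => rw [aC, Finset.mul_sum]
    rw [aC]
    symm
    refine Finset.sum_bij (fun g _ => g + C t * X ^ (m-d)) (fun g hg => hmem t g hg) ?_ ?_ ?_
    · intro a _ b _ h; exact add_right_cancel h
    · intro g hg
      refine ⟨g + C (-t) * X ^ (m-d), hmem _ g hg, ?_⟩
      simp
    · intro g hg
      rw [Phi_shift Ψ f d hd hd0 m hm t g hg (hmem t g hg), htu]
  have : (1 - Ψ (algebraMap (ZMod p) K u)) * aC p Ψ (fun θ => aeval θ f) m = 0 := by
    rw [sub_mul, one_mul, sub_eq_zero]; exact key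
  rcases mul_eq_zero.1 this with h | h
  · exact absurd (sub_eq_zero.1 h).symm hu
  · exact h

theorem aeval_pow_p (f : (ZMod p)[X]) (x : K) (i : ℕ) : aeval (x ^ (p^i)) f = (aeval x f) ^ (p^i) := by
  induction i with
  | zero => simp
  | succ i ih =>
    rw [pow_succ, pow_mul, pow_mul, ← ih, ← expand_aeval, ZMod.expand_card, map_pow]

theorem sC_bound [IsAlgClosed K] (ψ : AddChar (ZMod p) ℂ) (hψ : ψ ≠ 0) (Ψ : AddChar K ℂ)
    (hΨ : ∀ t, Ψ (algebraMap (ZMod p) K t) = ψ t) (f : (ZMod p)[X]) (d : ℕ) (hd : f.natDegree = d)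
    (hpd : Nat.Coprime p d) (c : ℕ) (hc : p ^ c + d + 1 < p ^ (c+1)) :
    ‖sC p Ψ (fun θ => aeval θ f) (2 * (c+1))‖ ≤ (p * (2 * d + 1)) * (p:ℝ) ^ (c+1) := by
  have hp : p.Prime := Fact.out
  set q := 2 * (c+1) with hq
  have hq0 : q ≠ 0 := by omega
  let T : K → K := fun x => ∑ i ∈ Finset.range q, (aeval x f) ^ (p^i)
  have hT : ∀ x ∈ Rt p K q, ∃ t : ZMod p, algebraMap (ZMod p) K t = T x := by
    intro x hx
    rw [mem_Rt hq0] at hx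
    apply fixed_mem
    have : (aeval x f) ^ (p^q) = aeval x f := by rw [← aeval_pow_p, hx]
    simp only [T]
    have : ExpChar K p := ExpChar.prime hp
    rw [sum_pow_char]
    simp_rw [← pow_mul, ← pow_succ]
    have e := Finset.sum_range_succ (fun i => (aeval x f) ^ (p^i)) q
    rw [Finset.sum_range_succ', pow_zero, pow_one] at e
    rw [‹aeval x f ^ p ^ q = _›] at e
    exact add_right_cancel e
  have : ∃ τ : K → ZMod p, ∀ x ∈ Rt p K q, algebraMap (ZMod p) K (τ x) = T x := by
    refine ⟨fun x => if h : x ∈ Rt p K q then (hT x h).choose else 0, fun x hx => ?_⟩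
    simp only [hx, dif_pos]
    exact (hT x hx).choose_spec
  obtain ⟨τ, hτ⟩ := this
  let N : ZMod p → Finset K := fun t => (Rt p K q).filter (fun x => τ x = t)
  set M : ℕ := p ^ (2*c+1) + (2*d+1) * p^(c+1) with hM
  have hN : ∀ t, (N t).card ≤ M := by
    intro t
    refine stepanov (f.map (algebraMap (ZMod p) K)) d (by rw [natDegree_map, hd]) hpd (algebraMap (ZMod p) K t) c hc (N t) ?_
    intro x hx
    obtain ⟨hx1, hx2⟩ := Finset.mem_filter.1 hx
    refine ⟨(mem_Rt hq0).1 hx1, ?_⟩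
    rw [← hx2, hτ x hx1]
    simp [T, hq, aeval_def, eval_map]
  have hsum : ∑ t : ZMod p, ((N t).card : ℝ) = (p:ℝ)^q := by
    have := Finset.card_eq_sum_card_fiberwise (f := τ) (s := Rt p K q) (t := Finset.univ) (fun _ _ => Finset.mem_coe.2 (Finset.mem_univ _))
    rw [card_Rt hq0] at this
    exact_mod_cast this.symm
  have hS : sC p Ψ (fun θ => aeval θ f) q = ∑ t : ZMod p, ((N t).card : ℂ) * ψ t := by
    rw [sC, ← Finset.sum_fiberwise (Rt p K q) τ]
    refine Finset.sum_congr rfl fun t _ => ?_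
    rw [Finset.sum_congr rfl (g := fun _ => ψ t), Finset.sum_const, nsmul_eq_mul]
    intro x hx
    obtain ⟨hx1, hx2⟩ := Finset.mem_filter.1 hx
    rw [Phi, orb, Multiset.map_map, ← hΨ t, ← hx2, hτ x hx1]
    simp only [T]
    congr 1
    change (Multiset.map _ (Multiset.range q)).sum = (Multiset.map _ (Multiset.range q)).sum
    congr 1
    refine Multiset.map_congr rfl fun i _ => ?_
    exact aeval_pow_p f x i
  have hS2 : sC p Ψ (fun θ => aeval θ f) q = ∑ t : ZMod p, (((N t).card : ℂ) - M) * ψ t := by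
    rw [hS]
    simp_rw [sub_mul]
    rw [Finset.sum_sub_distrib, ← Finset.mul_sum, AddChar.sum_eq_zero_iff_ne_zero.2 hψ]; simp
  rw [hS2]
  refine (norm_sum_le _ _).trans ?_
  have hb : ∀ t : ZMod p, ‖(((N t).card : ℂ) - M) * ψ t‖ = (M : ℝ) - (N t).card := by
    intro t
    rw [norm_mul, AddChar.norm_apply, mul_one, ← norm_neg, neg_sub]
    have : ((M:ℂ) - (N t).card) = (((M:ℝ) - (N t).card : ℝ) : ℂ) := by push_cast; rfl
    rw [this, Complex.norm_real, Real.norm_of_nonneg]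
    have := hN t
    rw [sub_nonneg]; exact_mod_cast this
  simp_rw [hb]
  rw [Finset.sum_sub_distrib, hsum, Finset.sum_const, Finset.card_univ, ZMod.card, nsmul_eq_mul, hM, hq]
  push_cast
  apply le_of_eq; ring
end

theorem weil_bound {p : ℕ} [Fact p.Prime] (ψ : AddChar (ZMod p) ℂ) (hψ : ψ ≠ 0)
    (f : (ZMod p)[X]) (d : ℕ) (hd : f.natDegree = d) (hpd : Nat.Coprime p d) :
    ‖∑ x : ZMod p, ψ (f.eval x)‖ ≤ d * Real.sqrt p := by
  have hp : p.Prime := Fact.out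
  have hd1 : 1 ≤ d := by
    rcases Nat.eq_zero_or_pos d with h | h
    · rw [h] at hpd; simp at hpd; exact absurd hpd hp.one_lt.ne'
    · exact h
  let K := AlgebraicClosure (ZMod p)
  have : CharP K p := charP_of_injective_algebraMap (algebraMap (ZMod p) K).injective p
  obtain ⟨π, hπ⟩ := LinearMap.exists_leftInverse_of_injective (Algebra.linearMap (ZMod p) K)
    (LinearMap.ker_eq_bot.2 (algebraMap (ZMod p) K).injective)
  let Ψ : AddChar K ℂ := ψ.compAddMonoidHom π.toAddMonoidHom
  have hΨ : ∀ t, Ψ (algebraMap (ZMod p) K t) = ψ t := by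
    intro t
    have := LinearMap.congr_fun hπ t
    simp at this
    simp [Ψ, AddChar.compAddMonoidHom_apply, this]
  have hne : ∃ u : ZMod p, Ψ (algebraMap (ZMod p) K u) ≠ 1 := by
    obtain ⟨u, hu⟩ := AddChar.ne_zero_iff.1 hψ
    exact ⟨u, by rwa [hΨ]⟩
  have h := lfun_bound (aC p Ψ (fun θ => aeval θ f)) (sC p Ψ (fun θ => aeval θ f)) d (aC_zero Ψ _)
    (fun m hm => aC_vanish Ψ f d hd hd1 hpd hne m hm) (recurrence Ψ _) p (p * (2*d+1))
    (by exact_mod_cast hp.pos) (d + 2) (by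
      intro c hc
      obtain ⟨c, rfl⟩ : ∃ c', c = c' + 1 := ⟨c - 1, by omega⟩
      refine sC_bound ψ hψ Ψ hΨ f d hd hpd c ?_
      have h1 : c < p ^ c := Nat.lt_pow_self hp.one_lt
      have h2 : 2 * p ^ c ≤ p ^ (c+1) := by
        rw [pow_succ, mul_comm]; exact Nat.mul_le_mul_left _ hp.two_le
      omega)
  have h1 : sC p Ψ (fun θ => aeval θ f) 1 = ∑ x : ZMod p, ψ (f.eval x) := by
    rw [sC]
    symm
    refine Finset.sum_bij (fun x _ => algebraMap (ZMod p) K x) ?_ ?_ ?_ ?_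
    · intro x _
      rw [mem_Rt one_ne_zero, pow_one, ← map_pow, ZMod.pow_card]
    · intro a _ b _ h; exact (algebraMap (ZMod p) K).injective h
    · intro y hy
      rw [mem_Rt one_ne_zero, pow_one] at hy
      obtain ⟨t, ht⟩ := fixed_mem y hy
      exact ⟨t, Finset.mem_univ _, ht⟩
    · intro x _
      rw [← hΨ]
      simp [Phi, orb, aeval_algebraMap_apply]
  rwa [h1] at h

end PartD

noncomputable def Sset (p : ℕ) [Fact p.Prime] (n k : ℕ) : Finset (ZMod p)[X] :=
  (Mon p n).filter (fun g => k ≤ polyIndexOver (ZMod p) g)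

theorem aroots_inj {p : ℕ} [Fact p.Prime] {K : Type*} [Field K] [Algebra (ZMod p) K]
    [IsAlgClosed K] {g h : (ZMod p)[X]} (hg : g.Monic) (hh : h.Monic)
    (e : g.aroots K = h.aroots K) : g = h := by
  apply Polynomial.map_injective (algebraMap (ZMod p) K) (algebraMap (ZMod p) K).injective
  have h1 := (IsAlgClosed.splits (g.map (algebraMap (ZMod p) K))).eq_prod_roots
  have h2 := (IsAlgClosed.splits (h.map (algebraMap (ZMod p) K))).eq_prod_roots
  rw [h1, h2, (hg.map _).leadingCoeff, (hh.map _).leadingCoeff]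
  unfold aroots at e
  rw [e]

theorem card_Sset (p : ℕ) [Fact p.Prime] (n k : ℕ) (hk : k ≤ n) :
    (Sset p n k).card ≤ (n+1)^(n+1) * p^(n-k) := by
  let K := AlgebraicClosure (ZMod p)
  haveI : CharP K p := charP_of_injective_algebraMap (algebraMap (ZMod p) K).injective p
  have hex : ∀ g : (ZMod p)[X], ∃ r : (ZMod p)[X], r.Monic ∧
      r.natDegree = Multiset.card (g.aroots K).dedup ∧ r.aroots K = (g.aroots K).dedup := by
    intro g
    apply lift_multiset
    conv_rhs => rw [← aroots_frob (p := p) (K := K) g]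
    exact (Multiset.dedup_map_of_injective (frobenius_inj K p) _).symm
  choose rad hrm hrd hra using hex
  let T : Finset (ZMod p)[X] := (Finset.range (n-k+1)).biUnion (fun t => Mon p t)
  have hT : T.card ≤ (n+1) * p^(n-k) := by
    refine Finset.card_biUnion_le.trans ?_
    refine (Finset.sum_le_card_nsmul _ _ (p^(n-k)) ?_).trans ?_
    · intro t ht
      rw [card_Mon]
      exact Nat.pow_le_pow_right (Fact.out : p.Prime).pos (by simp at ht; omega)
    · rw [Finset.card_range, smul_eq_mul]
      exact Nat.mul_le_mul_right _ (by omega)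
  have hcardle : ∀ g : (ZMod p)[X], Multiset.card (g.aroots K).dedup ≤ g.natDegree := by
    intro g
    rw [← card_aroots' (K := K) g]
    exact Multiset.card_le_card (Multiset.dedup_le _)
  have hmaps : ∀ g ∈ Sset p n k, rad g ∈ T := by
    intro g hg
    rw [Sset, Finset.mem_filter, mem_Mon] at hg
    obtain ⟨⟨hm, hd⟩, hidx⟩ := hg
    rw [Finset.mem_biUnion]
    refine ⟨(rad g).natDegree, ?_, mem_Mon.2 ⟨hrm g, rfl⟩⟩
    rw [hrd, Finset.mem_range]
    have h1 : k ≤ g.natDegree - Multiset.card (g.aroots K).dedup := hidx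
    have := hcardle g
    omega
  have hfib : ∀ r ∈ T, ((Sset p n k).filter (fun g => rad g = r)).card ≤ (n+1)^n := by
    intro r hr
    rcases Finset.eq_empty_or_nonempty ((Sset p n k).filter (fun g => rad g = r)) with h0 | ⟨g0, hg0⟩
    · rw [h0]; simp
    rw [Finset.mem_filter] at hg0
    let R : Finset K := (r.aroots K).toFinset
    have hR : R.card ≤ n := by
      have h1 := hg0.1
      rw [Sset, Finset.mem_filter, mem_Mon] at h1
      have h2 := hcardle g0
      have h3 : R.card = Multiset.card (g0.aroots K).dedup := by
        change ((r.aroots K).dedup).card = _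
        rw [← hg0.2, hra, Multiset.dedup_idem]
      omega
    have hinj : ((Sset p n k).filter (fun g => rad g = r)).card ≤
        (Finset.univ : Finset (R → Fin (n+1))).card := by
      refine Finset.card_le_card_of_injOn
        (fun g (x : R) => (Fin.ofNat (n+1) ((g.aroots K).count x.1))) (fun _ _ => Finset.mem_coe.2 (Finset.mem_univ _)) ?_
      intro g hg h hh e
      simp only [Finset.coe_filter, Set.mem_setOf_eq, Sset, Finset.mem_filter, mem_Mon] at hg hh
      apply aroots_inj (K := K) hg.1.1.1 hh.1.1.1
      ext x
      by_cases hx : x ∈ R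
      · have e1 := congrFun e ⟨x, hx⟩
        have e2 := congrArg Fin.val e1
        simp only [Fin.val_ofNat] at e2
        have c1 : (g.aroots K).count x ≤ n := by
          rw [← hg.1.1.2, ← card_aroots' (K := K) g]; exact Multiset.count_le_card _ _
        have c2 : (h.aroots K).count x ≤ n := by
          rw [← hh.1.1.2, ← card_aroots' (K := K) h]; exact Multiset.count_le_card _ _
        rwa [Nat.mod_eq_of_lt (by omega), Nat.mod_eq_of_lt (by omega)] at e2
      · have hx1 : x ∉ g.aroots K := by
          intro h1; apply hx
          rw [Multiset.mem_toFinset, ← hg.2, hra]; exact Multiset.mem_dedup.2 h1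
        have hx2 : x ∉ h.aroots K := by
          intro h1; apply hx
          rw [Multiset.mem_toFinset, ← hh.2, hra]; exact Multiset.mem_dedup.2 h1
        rw [Multiset.count_eq_zero_of_notMem hx1, Multiset.count_eq_zero_of_notMem hx2]
    refine hinj.trans ?_
    rw [Finset.card_univ, Fintype.card_fun, Fintype.card_fin, Fintype.card_coe]
    exact Nat.pow_le_pow_right (by omega) hR
  calc (Sset p n k).card ≤ (n+1)^n * T.card :=
        Finset.card_le_mul_card_image_of_maps_to hmaps _ hfib
    _ ≤ (n+1)^n * ((n+1) * p^(n-k)) := Nat.mul_le_mul_left _ hT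
    _ = _ := by ring

theorem taylor_mem_Sset {p : ℕ} [Fact p.Prime] {n k : ℕ} (c : ZMod p) {g : (ZMod p)[X]}
    (hg : g ∈ Sset p n k) : taylor c g ∈ Sset p n k := by
  rw [Sset, Finset.mem_filter, mem_Mon] at hg ⊢
  obtain ⟨⟨hm, hd⟩, hidx⟩ := hg
  refine ⟨⟨?_, by rw [natDegree_taylor, hd]⟩, ?_⟩
  · rw [Monic, leadingCoeff_taylor]; exact hm
  · refine hidx.trans_eq ?_
    unfold polyIndexOver
    rw [natDegree_taylor]
    congr 1
    set φ := algebraMap (ZMod p) (AlgebraicClosure (ZMod p))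
    have hne : g.map φ ≠ 0 := (hm.map φ).ne_zero
    have hmt : (taylor c g).map φ = taylor (φ c) (g.map φ) := by
      rw [map_taylor]
    have hne2 : taylor (φ c) (g.map φ) ≠ 0 := by
      intro h; apply hne; exact taylor_injective (φ c) (by rw [h, map_zero])
    rw [hmt]
    apply Finset.card_bij (fun x _ => x - φ c)
    · intro x hx
      rw [Multiset.mem_toFinset, mem_roots hne] at hx
      rw [Multiset.mem_toFinset, mem_roots hne2, IsRoot, taylor_eval, sub_add_cancel]
      exact hx
    · intro x _ y _ h; exact sub_left_injective h
    · intro y hy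
      rw [Multiset.mem_toFinset, mem_roots hne2, IsRoot, taylor_eval] at hy
      exact ⟨y + φ c, by rw [Multiset.mem_toFinset, mem_roots hne]; exact hy, by simp⟩

theorem sum_taylor {p : ℕ} [Fact p.Prime] {n k : ℕ} (c : ZMod p) (φ : (ZMod p)[X] → ℝ) :
    ∑ g ∈ Sset p n k, φ (taylor c g) = ∑ g ∈ Sset p n k, φ g := by
  apply Finset.sum_bij' (fun g _ => taylor c g) (fun g _ => taylor (-c) g)
  · intro g hg; exact taylor_mem_Sset c hg
  · intro g hg; exact taylor_mem_Sset (-c) hg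
  · intro g _; rw [taylor_taylor]; simp
  · intro g _; rw [taylor_taylor]; simp
  · intro g _; rfl

theorem addChar_sum {A ι : Type*} [AddCommMonoid A] (ψ : AddChar A ℂ) (s : Finset ι) (f : ι → A) :
    ψ (∑ i ∈ s, f i) = ∏ i ∈ s, ψ (f i) := by
  induction s using Finset.induction_on with
  | empty => simp
  | insert a s ha ih => rw [Finset.sum_insert ha, Finset.prod_insert ha, AddChar.map_add_eq_mul, ih]

theorem lin_weil {p : ℕ} [Fact p.Prime] (ψ : AddChar (ZMod p) ℂ) (hψ : ψ ≠ 0) {n : ℕ} (hnp : n < p)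
    {g : (ZMod p)[X]} (hg : g ∈ Mon p n) (u : Fin n → ZMod p) (hu : u ≠ 0) :
    ‖∑ c : ZMod p, ψ (∑ i, u i * (taylor c g).coeff (n-1-(i:ℕ)))‖ ≤ n * Real.sqrt p := by
  obtain ⟨hm, hd⟩ := mem_Mon.1 hg
  let U : (ZMod p)[X] := ∑ i : Fin n, C (u i) * hasseDeriv (n-1-(i:ℕ)) g
  have hU : ∀ c, ∑ i, u i * (taylor c g).coeff (n-1-(i:ℕ)) = U.eval c := by
    intro c
    simp only [U, eval_finsetSum, eval_mul, eval_C, taylor_coeff]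
  simp only [hU]
  have hne : (Finset.univ.filter (fun i => u i ≠ 0)).Nonempty := by
    obtain ⟨i, hi⟩ := Function.ne_iff.1 hu
    exact ⟨i, by simpa using hi⟩
  let i0 := (Finset.univ.filter (fun i => u i ≠ 0)).max' hne
  have hi0 : u i0 ≠ 0 := by
    have := Finset.max'_mem _ hne
    exact (Finset.mem_filter.1 this).2
  have hmax : ∀ i, i0 < i → u i = 0 := by
    intro i hi
    by_contra h
    exact absurd (Finset.le_max' _ i (Finset.mem_filter.2 ⟨Finset.mem_univ _, h⟩)) (not_le.2 hi)
  have hp := (Fact.out : p.Prime)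
  have hdeg : U.natDegree = (i0:ℕ) + 1 := by
    apply natDegree_eq_of_le_of_coeff_ne_zero
    · apply natDegree_sum_le_of_forall_le
      intro i _
      by_cases h : i0 < i
      · rw [hmax i h]; simp
      · refine (natDegree_C_mul_le _ _).trans ((natDegree_hasseDeriv_le _ _).trans ?_)
        have : (i:ℕ) ≤ i0 := by simpa using h
        omega
    · simp only [U, finsetSum_coeff, coeff_C_mul]
      rw [Finset.sum_eq_single i0]
      · refine mul_ne_zero hi0 ?_
        rw [hasseDeriv_coeff]
        have h1 : (i0:ℕ) + 1 + (n - 1 - i0) = n := by have := i0.2; omega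
        have h3 : g.coeff n = 1 := by rw [← hd]; exact hm.coeff_natDegree
        rw [h1, h3, mul_one]
        intro h
        rw [ZMod.natCast_eq_zero_iff] at h
        have h2 : p ∣ n.factorial := by
          have := Nat.choose_mul_factorial_mul_factorial (n := n) (k := n-1-i0) (by omega)
          rw [← this, mul_assoc]; exact Dvd.dvd.mul_right h _
        rw [hp.dvd_factorial] at h2
        omega
      · intro i _ hi
        by_cases h : i0 < i
        · rw [hmax i h, zero_mul]
        · have hlt : (i:ℕ) < i0 := lt_of_le_of_ne (by simpa using h) (fun h => hi (Fin.ext h))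
          rw [coeff_eq_zero_of_natDegree_lt, mul_zero]
          refine (natDegree_hasseDeriv_le _ _).trans_lt ?_
          have := i0.2
          omega
      · simp
  refine (weil_bound ψ hψ U _ hdeg ?_).trans ?_
  · apply Nat.coprime_of_lt_prime (by omega) (by have := i0.2; omega) hp
  · gcongr
    have := i0.2
    omega

noncomputable def Fej {p : ℕ} [Fact p.Prime] (ψ : AddChar (ZMod p) ℂ) (M : ℕ) (a : ZMod p) : ℝ :=
  ‖∑ m ∈ Finset.range M, ψ ((m : ZMod p) * a)‖^2

theorem Fej_expand {p : ℕ} [Fact p.Prime] (ψ : AddChar (ZMod p) ℂ) (M : ℕ) (a : ZMod p) :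
    (Fej ψ M a : ℂ) = ∑ q ∈ Finset.range M ×ˢ Finset.range M, ψ (((q.1 : ZMod p) - q.2) * a) := by
  unfold Fej
  push_cast
  rw [← Complex.mul_conj', map_sum, Finset.sum_mul_sum, Finset.sum_product]
  refine Finset.sum_congr rfl fun m _ => Finset.sum_congr rfl fun m' _ => ?_
  rw [← AddChar.map_neg_eq_conj, ← AddChar.map_add_eq_mul]
  congr 1; ring

theorem fejer_sum {p : ℕ} [Fact p.Prime] (ψ : AddChar (ZMod p) ℂ) (hψ : ψ ≠ 0) {n : ℕ} (hnp : n < p)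
    {g : (ZMod p)[X]} (hg : g ∈ Mon p n) (M : ℕ) (hM : M ≤ p) :
    ∑ c : ZMod p, ∏ i : Fin n, Fej ψ M ((taylor c g).coeff (n-1-(i:ℕ))) ≤
      p * (M:ℝ)^n + (M:ℝ)^(2*n) * (n * Real.sqrt p) := by
  let Q := Finset.range M ×ˢ Finset.range M
  let W := Fintype.piFinset (fun _ : Fin n => Q)
  let u : (Fin n → ℕ × ℕ) → Fin n → ZMod p := fun w i => ((w i).1 : ZMod p) - (w i).2
  have h1 : ((∑ c : ZMod p, ∏ i : Fin n, Fej ψ M ((taylor c g).coeff (n-1-(i:ℕ))) : ℝ) : ℂ)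
      = ∑ w ∈ W, ∑ c : ZMod p, ψ (∑ i, u w i * (taylor c g).coeff (n-1-(i:ℕ))) := by
    push_cast
    rw [Finset.sum_comm]
    refine Finset.sum_congr rfl fun c _ => ?_
    simp only [Fej_expand]
    rw [Finset.prod_univ_sum]
    refine Finset.sum_congr rfl fun w _ => ?_
    exact (addChar_sum ψ _ _).symm
  have h0 : 0 ≤ ∑ c : ZMod p, ∏ i : Fin n, Fej ψ M ((taylor c g).coeff (n-1-(i:ℕ))) :=
    Finset.sum_nonneg fun c _ => Finset.prod_nonneg fun i _ => sq_nonneg _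
  rw [← Real.norm_of_nonneg h0, ← Complex.norm_real, h1]
  have hdiag : (W.filter (fun w => u w = 0)).card ≤ M^n := by
    have : (W.filter (fun w => u w = 0)).card ≤ (Fintype.piFinset (fun _ : Fin n => Finset.range M)).card := by
      apply Finset.card_le_card_of_injOn (fun w i => (w i).1)
      · intro w hw
        simp only [Finset.coe_filter, Set.mem_setOf_eq, W, Fintype.mem_piFinset, Q, Finset.mem_product] at hw
        simp only [Finset.mem_coe, Fintype.mem_piFinset]
        exact fun i => (hw.1 i).1
      · have key : ∀ w ∈ W.filter (fun w => u w = 0), ∀ i, (w i).1 = (w i).2 := by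
          intro w hw i
          simp only [Finset.mem_filter, W, Fintype.mem_piFinset, Q, Finset.mem_product, Finset.mem_range] at hw
          have h2 := congrFun hw.2 i
          simp only [u, Pi.zero_apply, sub_eq_zero] at h2
          rw [ZMod.natCast_eq_natCast_iff'] at h2
          have := hw.1 i
          rwa [Nat.mod_eq_of_lt (by omega), Nat.mod_eq_of_lt (by omega)] at h2
        intro w hw w' hw' e
        funext i
        have e1 := congrFun e i
        have k1 := key w hw i
        have k2 := key w' hw' i
        simp only at e1
        ext
        · exact e1
        · rw [← k1, ← k2, e1]
    simpa using this
  have hW : W.card = M^(2*n) := by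
    simp [W, Q, pow_mul, pow_two]
  calc ‖∑ w ∈ W, ∑ c : ZMod p, ψ (∑ i, u w i * (taylor c g).coeff (n-1-(i:ℕ)))‖
      ≤ ∑ w ∈ W, ‖∑ c : ZMod p, ψ (∑ i, u w i * (taylor c g).coeff (n-1-(i:ℕ)))‖ := norm_sum_le _ _
    _ ≤ ∑ w ∈ W, ((if u w = 0 then (p:ℝ) else 0) + n * Real.sqrt p) := by
        refine Finset.sum_le_sum fun w _ => ?_
        split_ifs with h
        · rw [h]
          simp
          positivity
        · rw [zero_add]
          exact lin_weil ψ hψ hnp hg _ h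
    _ = (W.filter (fun w => u w = 0)).card * (p:ℝ) + W.card * (n * Real.sqrt p) := by
        rw [Finset.sum_add_distrib, ← Finset.sum_filter, Finset.sum_const, Finset.sum_const,
          nsmul_eq_mul, nsmul_eq_mul]
    _ ≤ _ := by
        rw [hW, mul_comm (p:ℝ)]
        push_cast
        gcongr
        exact_mod_cast hdiag

theorem Fej_lower {p : ℕ} [Fact p.Prime] (M : ℕ) (H : ℝ) (a : ℤ) (ha : |(a:ℝ)| ≤ H)
    (hM : 8 * H * M ≤ p) : ((M:ℝ)/2)^2 ≤ Fej (ZMod.stdAddChar (N := p)) M (a : ZMod p) := by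
  have hp : (0:ℝ) < p := by exact_mod_cast (Fact.out : p.Prime).pos
  unfold Fej
  gcongr
  refine le_trans ?_ (Complex.re_le_norm _)
  rw [Complex.re_sum]
  have hterm : ∀ m ∈ Finset.range M, (1/2:ℝ) ≤ (ZMod.stdAddChar ((m : ZMod p) * (a : ZMod p))).re := by
    intro m hm
    have hmM : (m:ℝ) ≤ M := by exact_mod_cast (Finset.mem_range.1 hm).le
    have e : ((m : ZMod p) * (a : ZMod p)) = (((m:ℤ) * a : ℤ) : ZMod p) := by push_cast; rfl
    rw [e, ZMod.stdAddChar_coe]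
    have e2 : 2 * (Real.pi:ℂ) * Complex.I * (((m:ℤ) * a : ℤ) : ℂ) / (p:ℂ) =
        ((2 * Real.pi * (m * a) / p : ℝ) : ℂ) * Complex.I := by
      push_cast; ring
    rw [e2, Complex.exp_ofReal_mul_I_re, ← Real.cos_abs, ← Real.cos_pi_div_three]
    have hpi := Real.pi_pos
    have hb : |2 * Real.pi * (m * a) / p| ≤ Real.pi / 3 := by
      rw [abs_div, abs_mul, abs_mul, abs_mul, abs_of_pos hp, abs_of_pos hpi, div_le_iff₀ hp]
      have h1 : |(m:ℝ)| * |(a:ℝ)| ≤ M * H := by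
        rw [Nat.abs_cast]
        exact mul_le_mul hmM ha (abs_nonneg _) (by positivity)
      rw [abs_of_pos (by norm_num : (0:ℝ) < 2)]
      have : |(m:ℝ)| * |(a:ℝ)| ≤ p / 8 := by nlinarith
      nlinarith
    apply Real.cos_le_cos_of_nonneg_of_le_pi (abs_nonneg _) (by linarith) hb
  have := Finset.card_nsmul_le_sum _ _ _ hterm
  rw [Finset.card_range, nsmul_eq_mul] at this
  linarith

noncomputable def Pz (p n : ℕ) (a : Fin n → ℤ) : (ZMod p)[X] :=
  X ^ n + ∑ i : Fin n, C ((a i : ZMod p)) * X ^ (n - 1 - (i : ℕ))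

theorem Pz_coeff (p n : ℕ) (a : Fin n → ℤ) (i : Fin n) :
    (Pz p n a).coeff (n - 1 - (i:ℕ)) = (a i : ZMod p) := by
  unfold Pz
  have hi := i.2
  rw [coeff_add, coeff_X_pow, if_neg (by omega), zero_add, finsetSum_coeff,
    Finset.sum_eq_single i]
  · simp
  · intro j _ hj
    have hj2 := j.2
    have hji : (j:ℕ) ≠ i := fun h => hj (Fin.ext h)
    rw [coeff_C_mul, coeff_X_pow, if_neg (by omega), mul_zero]
  · simp

theorem Pz_mem (p n : ℕ) [Fact p.Prime] (a : Fin n → ℤ) : Pz p n a ∈ Mon p n := by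
  rw [mem_Mon]
  have hdeg : (∑ i : Fin n, C ((a i : ZMod p)) * X ^ (n - 1 - (i : ℕ))).degree < (n : WithBot ℕ) := by
    rw [degree_lt_iff_coeff_zero]
    intro m hm
    rw [finsetSum_coeff]
    refine Finset.sum_eq_zero fun i _ => ?_
    have := i.2
    rw [coeff_C_mul, coeff_X_pow, if_neg (by omega), mul_zero]
  refine ⟨monic_X_pow_add hdeg, ?_⟩
  unfold Pz
  rw [natDegree_add_eq_left_of_degree_lt, natDegree_X_pow]
  rw [degree_X_pow]; exact hdeg

def Bset (p : ℕ) [Fact p.Prime] (n k : ℕ) (H : ℝ) : Set (Fin n → ℤ) :=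
  {a | (∀ i, |(a i : ℝ)| ≤ H) ∧ k ≤ polyIndexOver (ZMod p) (Pz p n a)}

theorem Bset_mem {p : ℕ} [Fact p.Prime] {n k : ℕ} {H : ℝ} {a : Fin n → ℤ} (ha : a ∈ Bset p n k H) :
    Pz p n a ∈ Sset p n k := by
  rw [Sset, Finset.mem_filter]
  exact ⟨Pz_mem p n a, ha.2⟩

theorem Bset_empty {p : ℕ} [Fact p.Prime] {n k : ℕ} {H : ℝ} (hk : n < k) :
    Bset p n k H = ∅ := by
  ext a
  simp only [Set.mem_empty_iff_false, iff_false]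
  intro ha
  have h1 := ha.2
  have h2 := (mem_Mon.1 (Pz_mem p n a)).2
  unfold polyIndexOver at h1
  omega

theorem Bset_small {p : ℕ} [Fact p.Prime] {n k : ℕ} {H : ℝ} (hH : 1 ≤ H) (hp : (p:ℝ) ≤ 8 * n * H) :
    ((Bset p n k H).ncard : ℝ) ≤ (Sset p n k).card * ((2 + 24 * n) * H / p) ^ n := by
  have hpp : (0:ℝ) < p := by exact_mod_cast (Fact.out : p.Prime).pos
  have hpz : (0:ℤ) < p := by exact_mod_cast (Fact.out : p.Prime).pos
  let N : ℕ := ⌊H / p⌋₊ + 1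
  let T : Finset ((ZMod p)[X] × (Fin n → ℤ)) :=
    Sset p n k ×ˢ Fintype.piFinset (fun _ : Fin n => Finset.Icc (-(N:ℤ)) N)
  have hNlt : H / p < N := by
    have := Nat.lt_floor_add_one (H / p)
    simpa [N] using this
  have hle : (Bset p n k H).ncard ≤ T.card := by
    rw [← Set.ncard_coe_finset]
    apply Set.ncard_le_ncard_of_injOn (fun a => (Pz p n a, fun i => a i / (p:ℤ)))
    · intro a ha
      simp only [T, Finset.mem_coe, Finset.mem_product, Fintype.mem_piFinset, Finset.mem_Icc]
      refine ⟨Bset_mem ha, fun i => ?_⟩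
      have h1 := abs_le.1 (ha.1 i)
      have h2 : (p:ℤ) * (a i / p) ≤ a i := Int.mul_ediv_self_le hpz.ne'
      have h3 : a i < (p:ℤ) * (a i / p) + p := Int.lt_mul_ediv_self_add hpz
      have h2' : (p:ℝ) * ((a i / p : ℤ) : ℝ) ≤ a i := by exact_mod_cast h2
      have h3' : (a i : ℝ) < (p:ℝ) * ((a i / p : ℤ) : ℝ) + p := by exact_mod_cast h3
      rw [div_lt_iff₀ hpp] at hNlt
      constructor
      · have : (-(N:ℝ)) < ((a i / p : ℤ) : ℝ) + 1 := by
          by_contra hcon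
          push Not at hcon
          nlinarith
        have h5 : (-(N:ℤ)) < (a i / p : ℤ) + 1 := by exact_mod_cast this
        omega
      · have : ((a i / p : ℤ) : ℝ) < N := by
          by_contra hcon
          push Not at hcon
          nlinarith
        have h5 : (a i / p : ℤ) < N := by exact_mod_cast this
        omega
    · intro a _ b _ e
      simp only [Prod.mk.injEq] at e
      funext i
      have e1 : (a i : ZMod p) = b i := by rw [← Pz_coeff p n a i, ← Pz_coeff p n b i, e.1]
      have e2 : a i / (p:ℤ) = b i / (p:ℤ) := congrFun e.2 i
      rw [ZMod.intCast_eq_intCast_iff'] at e1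
      rw [← Int.mul_ediv_add_emod (a i) p, ← Int.mul_ediv_add_emod (b i) p, e1, e2]
  have hTc : T.card = (Sset p n k).card * (2 * N + 1) ^ n := by
    simp only [T, Finset.card_product, Fintype.card_piFinset, Int.card_Icc, Finset.prod_const, Finset.card_univ, Fintype.card_fin]
    congr 2
    omega
  rw [hTc] at hle
  have hle' : ((Bset p n k H).ncard : ℝ) ≤ (Sset p n k).card * (2 * (N:ℝ) + 1) ^ n := by exact_mod_cast hle
  refine hle'.trans ?_
  gcongr
  have hN : (N:ℝ) ≤ H / p + 1 := by
    have := Nat.floor_le (show 0 ≤ H / p by positivity)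
    simp only [N]; push_cast; linarith
  have h1 : 1 ≤ 8 * n * (H / p) := by
    rw [← mul_div_assoc, le_div_iff₀ hpp]; linarith
  have : (2 + 24 * n) * H / p = 2 * (H / p) + 3 * (8 * n * (H / p)) := by ring
  rw [this]; linarith

theorem Bset_large {p : ℕ} [Fact p.Prime] {n k : ℕ} {H : ℝ} (hn : 1 ≤ n) (hH : 1 ≤ H)
    (hp : 8 * n * H < (p:ℝ)) :
    ((Bset p n k H).ncard : ℝ) ≤ (Sset p n k).card * (64 ^ n * H ^ n / (p:ℝ) ^ n + 4 ^ n * n / Real.sqrt p) := by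
  have hpp : (0:ℝ) < p := by exact_mod_cast (Fact.out : p.Prime).pos
  have hn' : (1:ℝ) ≤ n := by exact_mod_cast hn
  have h8 : 8 * H < p := by nlinarith
  have hnp : n < p := by
    have : (n:ℝ) < p := by nlinarith
    exact_mod_cast this
  let M : ℕ := ⌊(p:ℝ) / (8 * H)⌋₊
  have hx1 : 1 ≤ (p:ℝ) / (8 * H) := by rw [le_div_iff₀ (by positivity)]; linarith
  have hM1 : 1 ≤ M := (Nat.one_le_floor_iff _).2 hx1
  have hMle : (M:ℝ) ≤ (p:ℝ) / (8 * H) := Nat.floor_le (by positivity)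
  have hMge : (p:ℝ) / (16 * H) ≤ M := by
    have h1 := Nat.lt_floor_add_one ((p:ℝ) / (8 * H))
    have h2 : (1:ℝ) ≤ M := by exact_mod_cast hM1
    have h3 : (p:ℝ) / (16 * H) = (p:ℝ) / (8 * H) / 2 := by rw [div_div]; ring
    rw [h3]
    change (p:ℝ) / (8 * H) < (M:ℝ) + 1 at h1
    linarith
  have h8M : 8 * H * M ≤ p := by
    rw [le_div_iff₀ (by positivity)] at hMle; linarith
  have hMp : M ≤ p := by
    have h2 : (0:ℝ) ≤ M := by positivity
    have : (M:ℝ) ≤ p := by nlinarith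
    exact_mod_cast this
  let ψ : AddChar (ZMod p) ℂ := ZMod.stdAddChar
  have hψ : ψ ≠ 0 := by
    intro h
    have h1 : (ZMod.stdAddChar (1 : ZMod p) : ℂ) = 1 := by
      change ψ 1 = 1
      rw [h]; rfl
    have h2 : (1 : ZMod p) = 0 := ZMod.injective_stdAddChar (by rw [h1, AddChar.map_zero_eq_one])
    exact one_ne_zero h2
  let φ : (ZMod p)[X] → ℝ := fun g => ∏ i : Fin n, Fej ψ M (g.coeff (n-1-(i:ℕ)))
  have hφ0 : ∀ g, 0 ≤ φ g := fun g => Finset.prod_nonneg fun i _ => sq_nonneg _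
  have hinj : Set.InjOn (Pz p n) (Bset p n k H) := by
    intro a ha b hb e
    funext i
    have e1 : (a i : ZMod p) = b i := by rw [← Pz_coeff p n a i, ← Pz_coeff p n b i, e]
    rw [eq_comm, ZMod.intCast_eq_intCast_iff_dvd_sub] at e1
    have h1 := abs_le.1 (ha.1 i)
    have h2 := abs_le.1 (hb.1 i)
    have h3 : |((a i - b i : ℤ) : ℝ)| < p := by
      rw [abs_lt]; push_cast; constructor <;> linarith
    have h4 : |a i - b i| < (p:ℤ) := by exact_mod_cast h3
    have := Int.eq_zero_of_abs_lt_dvd e1 h4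
    omega
  have hfin : (Bset p n k H).Finite :=
    Set.Finite.of_injOn (f := Pz p n) (t := (Sset p n k : Set (ZMod p)[X])) (fun a ha => Bset_mem ha) hinj (Finset.finite_toSet _)
  have hlow : ((Bset p n k H).ncard : ℝ) * (((M:ℝ)/2)^2)^n ≤ ∑ g ∈ Sset p n k, φ g := by
    rw [Set.ncard_eq_toFinset_card _ hfin, ← nsmul_eq_mul]
    calc _ ≤ ∑ a ∈ hfin.toFinset, φ (Pz p n a) := by
          apply Finset.card_nsmul_le_sum
          intro a ha
          have ha' : a ∈ Bset p n k H := by simpa using ha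
          simp only [φ, Pz_coeff]
          calc (((M:ℝ)/2)^2)^n = ∏ i : Fin n, ((M:ℝ)/2)^2 := by simp
            _ ≤ _ := Finset.prod_le_prod (fun _ _ => sq_nonneg _)
                (fun i _ => Fej_lower M H (a i) (ha'.1 i) h8M)
      _ = ∑ g ∈ hfin.toFinset.image (Pz p n), φ g := by
          rw [Finset.sum_image]
          intro a ha b hb e
          exact hinj (by simpa using ha) (by simpa using hb) e
      _ ≤ _ := by
          apply Finset.sum_le_sum_of_subset_of_nonneg
          · intro g hg
            obtain ⟨a, ha, rfl⟩ := Finset.mem_image.1 hg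
            exact Bset_mem (by simpa using ha)
          · intro g _ _; exact hφ0 g
  have hup : (p:ℝ) * ∑ g ∈ Sset p n k, φ g ≤
      (Sset p n k).card * (p * (M:ℝ)^n + (M:ℝ)^(2*n) * (n * Real.sqrt p)) := by
    calc (p:ℝ) * ∑ g ∈ Sset p n k, φ g = ∑ c : ZMod p, ∑ g ∈ Sset p n k, φ (taylor c g) := by
          simp only [sum_taylor]
          rw [Finset.sum_const, Finset.card_univ, ZMod.card, nsmul_eq_mul]
      _ = ∑ g ∈ Sset p n k, ∑ c : ZMod p, φ (taylor c g) := Finset.sum_comm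
      _ ≤ _ := by
          rw [← nsmul_eq_mul]
          apply Finset.sum_le_card_nsmul
          intro g hg
          exact fejer_sum ψ hψ hnp (Finset.mem_filter.1 hg).1 M hMp
  set s : ℝ := ((Sset p n k).card : ℝ) with hs
  have hs0 : 0 ≤ s := by positivity
  set N : ℝ := ((Bset p n k H).ncard : ℝ)
  have hM0 : (0:ℝ) < M := by exact_mod_cast hM1
  have hsq : Real.sqrt p * Real.sqrt p = p := Real.mul_self_sqrt hpp.le
  have hsq0 : 0 < Real.sqrt p := Real.sqrt_pos.2 hpp
  have h1 : N ≤ s * (4^n / (M:ℝ)^n + 4^n * n / Real.sqrt p) := by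
    have h2 : (p:ℝ) * (N * (((M:ℝ)/2)^2)^n) ≤ s * (p * (M:ℝ)^n + (M:ℝ)^(2*n) * (n * Real.sqrt p)) :=
      (mul_le_mul_of_nonneg_left hlow hpp.le).trans hup
    have h3 : (((M:ℝ)/2)^2)^n = ((M:ℝ)^n)^2 / 4^n := by
      rw [div_pow, div_pow, pow_right_comm]; norm_num
    rw [h3] at h2
    have hc : 0 < (p:ℝ) * (((M:ℝ)^n)^2 / 4^n) := by positivity
    refine le_of_mul_le_mul_left ?_ hc
    calc (p:ℝ) * (((M:ℝ)^n)^2 / 4^n) * N = (p:ℝ) * (N * (((M:ℝ)^n)^2 / 4^n)) := by ring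
      _ ≤ _ := h2
      _ = _ := by
        have : (M:ℝ)^(2*n) = ((M:ℝ)^n)^2 := by rw [← pow_mul, mul_comm]
        rw [this]
        have hMn : (M:ℝ)^n ≠ 0 := by positivity
        generalize (M:ℝ)^n = y at *
        generalize Real.sqrt p = r at *
        have hr : r ≠ 0 := ne_of_gt hsq0
        rw [← hsq]
        field_simp
  refine h1.trans ?_
  refine mul_le_mul_of_nonneg_left (add_le_add ?_ le_rfl) hs0
  rw [div_le_div_iff₀ (by positivity) (by positivity)]
  have h5 : (p:ℝ) ≤ 16 * H * M := by
    rw [div_le_iff₀ (by positivity)] at hMge; linarith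
  calc (4:ℝ)^n * (p:ℝ)^n ≤ 4^n * (16 * H * M)^n := by gcongr
    _ = 64 ^ n * H ^ n * (M:ℝ) ^ n := by
      rw [mul_pow, mul_pow, ← mul_assoc, ← mul_assoc, ← mul_pow]; norm_num

/-- Corollary 4.6 of Bhargava's paper. Fix `n ≥ 1`, `k ≥ 0` and `ε > 0`. There is a
constant `C` such that for every prime `p` and every `H ≥ 1`, the number of monic
integer polynomials `x^n + a_1 x^{n-1} + ... + a_n` with `|a_i| ≤ H` whose reduction
modulo `p` has index at least `k` over `𝔽_p` is at most
`C·(H^n/p^k + p^{n-k-1/2+ε})`. -/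
theorem index_ge_k_count_single_prime (n : ℕ) (hn : 1 ≤ n) (k : ℕ) (ε : ℝ)
    (hε : 0 < ε) :
    ∃ C : ℝ, 0 < C ∧ ∀ (p : ℕ) (hp : p.Prime) (H : ℝ), 1 ≤ H →
      (Set.ncard {a : Fin n → ℤ |
          (∀ i, |(a i : ℝ)| ≤ H) ∧ k ≤ indexModP p hp n a} : ℝ)
        ≤ C * (H ^ n / (p : ℝ) ^ k + (p : ℝ) ^ ((n : ℝ) - k - 1 / 2 + ε)) := by
  let A0 : ℝ := ((n:ℝ)+1)^(n+1)
  have hA0 : 0 < A0 := by positivity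
  refine ⟨A0 * ((2 + 24 * n)^n + 64^n + 4^n * n), by positivity, ?_⟩
  intro p hp H hH
  have hfact : Fact p.Prime := ⟨hp⟩
  change ((Bset p n k H).ncard : ℝ) ≤ _
  have hpp : (0:ℝ) < p := by exact_mod_cast hp.pos
  have hp1 : (1:ℝ) ≤ p := by exact_mod_cast hp.one_lt.le
  rcases lt_or_ge n k with hk | hk
  · rw [Bset_empty hk]
    simp only [Set.ncard_empty, Nat.cast_zero]
    positivity
  have hS : ((Sset p n k).card : ℝ) ≤ A0 * (p:ℝ)^(n-k) := by
    have := card_Sset p n k hk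
    simp only [A0]
    exact_mod_cast this
  have hpow : (p:ℝ)^(n-k) * (H^n / (p:ℝ)^n) = H^n / (p:ℝ)^k := by
    have : (p:ℝ)^n = (p:ℝ)^(n-k) * (p:ℝ)^k := by rw [← pow_add]; congr 1; omega
    rw [this]; field_simp
  have hrp : (p:ℝ)^(n-k) / Real.sqrt p ≤ (p : ℝ) ^ ((n : ℝ) - k - 1 / 2 + ε) := by
    rw [Real.sqrt_eq_rpow, ← Real.rpow_natCast, ← Real.rpow_sub hpp, Nat.cast_sub hk]
    exact Real.rpow_le_rpow_of_exponent_le hp1 (by linarith)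
  set Y := (p : ℝ) ^ ((n : ℝ) - k - 1 / 2 + ε) with hY
  have hY0 : 0 < Y := by positivity
  set Z := H ^ n / (p:ℝ) ^ k with hZ
  have hZ0 : 0 < Z := by positivity
  rcases le_or_gt (p:ℝ) (8 * n * H) with hc | hc
  · calc ((Bset p n k H).ncard : ℝ) ≤ (Sset p n k).card * ((2 + 24 * n) * H / p) ^ n := Bset_small hH hc
      _ ≤ (A0 * (p:ℝ)^(n-k)) * ((2 + 24 * n) * H / p) ^ n := by gcongr
      _ = A0 * ((2 + 24 * n)^n * ((p:ℝ)^(n-k) * (H^n / (p:ℝ)^n))) := by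
          rw [div_pow, mul_pow]; ring
      _ = A0 * ((2 + 24 * n)^n * Z) := by rw [hpow]
      _ ≤ A0 * (((2 + 24 * n)^n + 64^n + 4^n * n) * (Z + Y)) := by
          gcongr
          · have : (0:ℝ) ≤ 64^n + 4^n * n := by positivity
            linarith
          · linarith
      _ = _ := by ring
  · calc ((Bset p n k H).ncard : ℝ) ≤ _ := Bset_large hn hH hc
      _ ≤ (A0 * (p:ℝ)^(n-k)) * (64 ^ n * H ^ n / (p:ℝ) ^ n + 4 ^ n * n / Real.sqrt p) := by gcongr
      _ = A0 * (64^n * ((p:ℝ)^(n-k) * (H^n / (p:ℝ)^n)) + 4^n * n * ((p:ℝ)^(n-k) / Real.sqrt p)) := by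
          ring
      _ ≤ A0 * (64^n * Z + 4^n * n * Y) := by rw [hpow]; gcongr
      _ ≤ A0 * (((2 + 24 * n)^n + 64^n + 4^n * n) * (Z + Y)) := by
          gcongr
          have h1 : (0:ℝ) ≤ (2 + 24 * n)^n * (Z + Y) := by positivity
          have h2 : (0:ℝ) ≤ 64^n * Y := by positivity
          have h3 : (0:ℝ) ≤ 4^n * n * Z := by positivity
          linarith
      _ = _ := by ring
end
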